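/- arXiv:1902.06355 — 2 statements merged into one kernel-verified Lean document; each statement's English description precedes it below -/
import Mathlib

section
/- (Proposition 1: Carleman estimate for the transport operator.) Let D be a graph domain as in the context and let μ > β > 0. There exist constants s₀ > 0 and C > 0, depending only on n, T, β, μ, M, δ₀ and D (but not on H, p, u, s below), such that for every (M,δ₀)-admissible vector field H on closure(D) satisfying ⟨H(x), ∇ψ_H(x)⟩ ≥ μ for all x ∈ closure(D), every measurable p : D → ℝ with |p| ≤ M, every u ∈ C¹(closure(D) × [0,T]) and every s > s₀, one has: s ∫_D |u(x,0)|² e^{2sφ_H(x,0)} dx + s² ∫₀^T ∫_D |u(x,t)|² e^{2sφ_H(x,t)} dx dt + C e^{−Cs} I₋ ≤ C ∫₀^T ∫_D |∂_t u + ⟨H(x), ∇_x u⟩ + p(x)u|² e^{2sφ_H(x,t)} dx dt + C e^{Cs} I₊ + C s ∫_D |u(x,T)|² e^{2sφ_H(x,T)} dx, where I₊ := Σ_{i=1,2} ∫₀^T ∫_{B_{ρ₁}} 1_{⟨H(G_i(x')), ν_i(x')⟩ ≥ 0} |u(G_i(x'), t)|² ω_i(x') dx' dt and I₋ := Σ_{i=1,2}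 ∫₀^T ∫_{B_{ρ₁}} 1_{⟨H(G_i(x')), ν_i(x')⟩ ≤ 0} |⟨H(G_i(x')), ν_i(x')⟩| |u(G_i(x'), t)|² ω_i(x') dx' dt. -/
noncomputable section

open MeasureTheory Metric Set
open scoped RealInnerProductSpace

abbrev Esp (n : ℕ) : Type := EuclideanSpace ℝ (Fin n)

/-- The point `(x', xₙ) ∈ ℝ^{d+1} = ℝ^d × ℝ`. -/
noncomputable def graphMk (d : ℕ) (x' : Esp d) (xn : ℝ) : Esp (d+1) :=
  (EuclideanSpace.equiv (Fin (d+1)) ℝ).symm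
    (Fin.snoc (⇑(EuclideanSpace.equiv (Fin d) ℝ) x') xn)

/-- `H` is `(M, δ₀)`-admissible on the compact set `K`. -/
def IsAdmissible {n : ℕ} (M δ₀ : ℝ) (K : Set (Esp n)) (H : Esp n → Esp n) : Prop :=
  ∃ U : Set (Esp n), IsOpen U ∧ Convex ℝ U ∧ K ⊆ U ∧ ContDiffOn ℝ 1 H U ∧
    (∀ x ∈ U, ‖H x‖ ≤ M) ∧ (∀ x ∈ U, ‖fderiv ℝ H x‖ ≤ M) ∧ (∀ x ∈ K, δ₀ < ‖H x‖)

/-- `ψ_H(x) = ⟨x, H(x)⟩`. -/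
noncomputable def psiW {n : ℕ} (H : Esp n → Esp n) (x : Esp n) : ℝ := ⟪x, H x⟫

/-- The Carleman weight `φ_H(x,t) = -βt + ψ_H(x)`. -/
noncomputable def phiW {n : ℕ} (β : ℝ) (H : Esp n → Esp n) (x : Esp n) (t : ℝ) : ℝ :=
  -(β * t) + psiW H x

/-- Outward unit normal `ν₁` of the upper graph `xₙ = ℓ(x')`. -/
noncomputable def nuUp (d : ℕ) (ℓ : Esp d → ℝ) (x' : Esp d) : Esp (d+1) :=
  (Real.sqrt (1 + ‖gradient ℓ x'‖ ^ 2))⁻¹ • graphMk d (-(gradient ℓ x')) 1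

/-- Outward unit normal `ν₂` of the lower graph `xₙ = m(x')`. -/
noncomputable def nuDown (d : ℕ) (m : Esp d → ℝ) (x' : Esp d) : Esp (d+1) :=
  (Real.sqrt (1 + ‖gradient m x'‖ ^ 2))⁻¹ • graphMk d (gradient m x') (-1)

/-- Area element `ω(x') = √(1 + |∇m(x')|²)` of the graph of `m`. -/
noncomputable def omegaW (d : ℕ) (m : Esp d → ℝ) (x' : Esp d) : ℝ :=
  Real.sqrt (1 + ‖gradient m x'‖ ^ 2)

/-- The graph domain `D = {(x', xₙ) : |x'| < ρ₁, ℓ(x') − ℓ̃(x') < xₙ < ℓ(x')}`. -/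
def graphDomain (d : ℕ) (ρ₁ : ℝ) (ℓ ℓt : Esp d → ℝ) : Set (Esp (d+1)) :=
  {x | ∃ x' : Esp d, ∃ xn : ℝ, ‖x'‖ < ρ₁ ∧ ℓ x' - ℓt x' < xn ∧ xn < ℓ x' ∧
    x = graphMk d x' xn}

/-!
By the divergence theorem in space-time, for the weight `w = e^{2sφ_H}`, the integral of
`w u (∂ₜu + H·∇u)` is a boundary term minus half the integral of `u² (∂ₜw + H·∇w + w div H)`.
Since `∂ₜw + H·∇w = 2s (H·∇ψ_H - β) w ≥ 2s (μ - β) w`, for large `s` this term dominates the bounded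
ones `p` and `div H`, and Young's inequality absorbs the cross term with the transport operator.
On the boundary the flux is split according to the sign of `H·ν`, and the weight is bounded above
and below by exponentials of `s`.

The divergence theorem on the graph domain follows by flattening the domain to a cylinder: the
Jacobian of the flattening is the thickness `ℓ̃`, so the horizontal part of the flux vanishes on
the lateral edge.
-/

section BddContOn

variable {X Y E F : Type*} [TopologicalSpace X] [TopologicalSpace Y] [TopologicalSpace E]
  [TopologicalSpace F] {S : Set X}

/-- `f` is continuous on `S` and takes its values there in a compact set, as does the restriction
to `S` of a function continuous on a compact set containing it. Compactness of the range, rather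
than boundedness, makes the notion stable under composition with continuous maps. -/
structure BddContOn (f : X → E) (S : Set X) : Prop where
  continuousOn : ContinuousOn f S
  exists_mapsTo : ∃ K, IsCompact K ∧ MapsTo f S K

namespace BddContOn

lemma of_isCompact {f : X → E} {K : Set X} (hK : IsCompact K) (hf : ContinuousOn f K)
    (hSK : S ⊆ K) : BddContOn f S :=
  ⟨hf.mono hSK, f '' K, hK.image_of_continuousOn hf, fun _ hx => mem_image_of_mem f (hSK hx)⟩

lemma prodMk {f : X → E} {g : X → F} (hf : BddContOn f S) (hg : BddContOn g S) :
    BddContOn (fun x => (f x, g x)) S := by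
  obtain ⟨hf, K, hK, hfK⟩ := hf
  obtain ⟨hg, L, hL, hgL⟩ := hg
  exact ⟨hf.prodMk hg, K ×ˢ L, hK.prod hL, fun x hx => ⟨hfK hx, hgL hx⟩⟩

lemma continuous_comp {f : X → E} {φ : E → F} (hφ : Continuous φ) (hf : BddContOn f S) :
    BddContOn (fun x => φ (f x)) S := by
  obtain ⟨hf, K, hK, hfK⟩ := hf
  exact ⟨hφ.comp_continuousOn hf, φ '' K, hK.image hφ, fun x hx => mem_image_of_mem φ (hfK hx)⟩

lemma comp {f : X → E} (hf : BddContOn f S) {φ : Y → X} {R : Set Y} (hφ : ContinuousOn φ R)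
    (h : MapsTo φ R S) : BddContOn (fun y => f (φ y)) R := by
  obtain ⟨hf, K, hK, hfK⟩ := hf
  exact ⟨hf.comp hφ h, K, hK, hfK.comp h⟩

lemma integrableOn [MeasurableSpace X] [OpensMeasurableSpace X] {E : Type*}
    [NormedAddCommGroup E] [SecondCountableTopologyEither X E] {μ : Measure X} {f : X → E}
    (hf : BddContOn f S) (hS : MeasurableSet S) (hμ : μ S ≠ ⊤) : IntegrableOn f S μ := by
  obtain ⟨hf, K, hK, hfK⟩ := hf
  obtain ⟨C, hC⟩ := hK.isBounded.exists_norm_le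
  exact ⟨hf.aestronglyMeasurable hS, .restrict_of_bounded (C := C) hμ.lt_top
    ((ae_restrict_iff' hS).2 (.of_forall fun x hx => hC _ (hfK hx)))⟩

lemma integrableOn_continuous_comp [MeasurableSpace X] [OpensMeasurableSpace X]
    {F G : Type*} [PseudoMetricSpace F] [SecondCountableTopologyEither X F] [NormedAddCommGroup G]
    {μ : Measure X} {f : X → F} {p : X → ℝ} {M : ℝ} {φ : F × ℝ → G} (hf : BddContOn f S)
    (hp : AEStronglyMeasurable p (μ.restrict S)) (hpM : ∀ x ∈ S, |p x| ≤ M) (hφ : Continuous φ)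
    (hS : MeasurableSet S) (hμ : μ S ≠ ⊤) : IntegrableOn (fun x => φ (f x, p x)) S μ := by
  obtain ⟨hf, K, hK, hfK⟩ := hf
  obtain ⟨C, hC⟩ := ((hK.prod (isCompact_closedBall (0 : ℝ) M)).image hφ).isBounded.exists_norm_le
  exact ⟨hφ.comp_aestronglyMeasurable ((hf.aestronglyMeasurable hS).prodMk hp),
    .restrict_of_bounded (C := C) hμ.lt_top ((ae_restrict_iff' hS).2 (.of_forall fun x hx =>
      hC _ (mem_image_of_mem φ ⟨hfK hx, mem_closedBall_zero_iff.2 (hpM x hx)⟩)))⟩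

end BddContOn

end BddContOn

section Fderiv

variable {E F : Type*} [NormedAddCommGroup E] [NormedSpace ℝ E] [NormedAddCommGroup F]
  [NormedSpace ℝ F]

lemma differentiableAt_of_contDiffOn {f : E → F} {K O : Set E} {x : E} (hf : ContDiffOn ℝ 1 f K)
    (hO : IsOpen O) (hOK : O ⊆ K) (hx : x ∈ O) : DifferentiableAt ℝ f x :=
  (hf.differentiableOn one_ne_zero).differentiableAt
    (Filter.mem_of_superset (hO.mem_nhds hx) hOK)

lemma exists_norm_fderiv_le_of_contDiffOn {f : E → F} {K O : Set E} (hK : IsCompact K)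
    (hO : IsOpen O) (hOK : O ⊆ K) (hf : ContDiffOn ℝ 1 f K) :
    ∃ C, ∀ x ∈ O, ‖fderiv ℝ f x‖ ≤ C := by
  suffices h : ∃ C, ∀ x ∈ O ∩ K, ‖fderiv ℝ f x‖ ≤ C by
    rwa [inter_eq_left.2 hOK] at h
  refine hK.induction_on (p := fun S => ∃ C, ∀ x ∈ O ∩ S, ‖fderiv ℝ f x‖ ≤ C)
    ⟨0, by simp⟩ ?mono ?union ?nhds
  case mono =>
    rintro s t hst ⟨C, h⟩
    exact ⟨C, fun x hx => h x ⟨hx.1, hst hx.2⟩⟩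
  case union =>
    rintro s t ⟨C, h⟩ ⟨C', h'⟩
    refine ⟨max C C', ?_⟩
    rintro x ⟨hx, hs | ht⟩
    · exact (h x ⟨hx, hs⟩).trans (le_max_left _ _)
    · exact (h' x ⟨hx, ht⟩).trans (le_max_right _ _)
  case nhds =>
    intro x hx
    obtain ⟨v, hv, -, -, f', hf', hcont⟩ :=
      (contDiffWithinAt_succ_iff_hasFDerivWithinAt' (n := 0) (by simp)).1
        (by simpa using hf x hx)
    rw [insert_eq_of_mem hx] at hv
    have hbound : ∀ᶠ y in nhdsWithin x K, ‖f' y‖ < ‖f' x‖ + 1 :=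
      hcont.continuousWithinAt.norm.eventually_lt continuousWithinAt_const (lt_add_one _)
    refine ⟨_, Filter.inter_mem hv hbound, ‖f' x‖ + 1, ?_⟩
    rintro y ⟨hyO, hyv, hy⟩
    have hderiv := (hf' y hyv).hasFDerivAt (Filter.mem_of_superset (hO.mem_nhds hyO) hOK)
    exact hderiv.fderiv ▸ hy.le

lemma bddContOn_fderiv [FiniteDimensional ℝ E] [FiniteDimensional ℝ F] {f : E → F} {K O : Set E}
    (hK : IsCompact K) (hO : IsOpen O) (hOK : O ⊆ K) (hf : ContDiffOn ℝ 1 f K) :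
    BddContOn (fderiv ℝ f) O := by
  obtain ⟨C, hC⟩ := exists_norm_fderiv_le_of_contDiffOn hK hO hOK hf
  exact ⟨(hf.mono hOK).continuousOn_fderiv_of_isOpen hO le_rfl, closedBall 0 C,
    isCompact_closedBall 0 C, fun x hx => mem_closedBall_zero_iff.2 (hC x hx)⟩

end Fderiv

section ZeroBoundary

variable {E F : Type*} [NormedAddCommGroup E] [NormedSpace ℝ E] [NormedAddCommGroup F]

lemma exists_mem_segment_frontier {s : Set E} (hs : IsOpen s) {x y : E} (hx : x ∈ s)
    (hy : y ∉ s) : ∃ z ∈ segment ℝ x y, z ∈ frontier s := by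
  by_contra! hfrontier
  refine hy ((convex_segment x y).isPreconnected.subset_left_of_subset_union hs
    isClosed_closure.isOpen_compl (disjoint_compl_right_iff_subset.2 subset_closure)
    (fun z hz => ?_) ⟨x, left_mem_segment ℝ x y, hx⟩ (right_mem_segment ℝ x y))
  by_cases hzs : z ∈ s
  · exact .inl hzs
  · exact .inr fun hzc => hfrontier z hz (hs.frontier_eq ▸ ⟨hzc, hzs⟩)

lemma lipschitzWith_indicator_of_zero_frontier {s : Set E} (hs : IsOpen s) {G : E → F}
    {C : NNReal} (hG : LipschitzOnWith C G (closure s)) (hG0 : ∀ x ∈ frontier s, G x = 0) :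
    LipschitzWith C (s.indicator G) := by
  have hout : ∀ x ∈ s, ∀ y ∉ s, dist (G x) 0 ≤ C * dist x y := by
    intro x hx y hy
    obtain ⟨z, hz, hzs⟩ := exists_mem_segment_frontier hs hx hy
    calc dist (G x) 0 = dist (G x) (G z) := by rw [hG0 z hzs]
      _ ≤ C * dist x z := hG.dist_le_mul x (subset_closure hx) z (frontier_subset_closure hzs)
      _ ≤ C * dist x y := by
        gcongr
        linarith [dist_add_dist_of_mem_segment hz, dist_nonneg (x := z) (y := y)]
  refine .of_dist_le_mul fun x y => ?_
  by_cases hx : x ∈ s <;> by_cases hy : y ∈ s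
  · simpa [hx, hy] using hG.dist_le_mul x (subset_closure hx) y (subset_closure hy)
  · simpa [hx, hy] using hout x hx y hy
  · simpa [hx, hy, dist_comm] using hout y hy x hx
  · simpa [hx, hy] using mul_nonneg C.coe_nonneg dist_nonneg

lemma setIntegral_fderiv_eq_zero_of_zero_frontier [FiniteDimensional ℝ E] [MeasurableSpace E]
    [BorelSpace E] {μ : Measure E} [μ.IsAddHaarMeasure] {s : Set E} (hs : IsOpen s)
    (hconv : Convex ℝ s) (hbdd : Bornology.IsBounded s) {G : E → ℝ}
    (hG : ContDiffOn ℝ 1 G (closure s)) (hG0 : ∀ x ∈ frontier s, G x = 0) (v : E) :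
    ∫ x in s, fderiv ℝ G x v ∂μ = 0 := by
  obtain ⟨C, hC⟩ := exists_norm_fderiv_le_of_contDiffOn hbdd.isCompact_closure hs subset_closure hG
  have hdiff : ∀ x ∈ s, DifferentiableAt ℝ G x := fun _ =>
    differentiableAt_of_contDiffOn hG hs subset_closure
  have hlip : LipschitzOnWith C.toNNReal G (closure s) :=
    (hconv.lipschitzOnWith_of_nnnorm_fderiv_le hdiff fun x hx =>
      NNReal.le_toNNReal_of_coe_le (hC x hx)).closure hG.continuousOn
  have hsupp : HasCompactSupport (s.indicator G) :=
    hbdd.isCompact_closure.of_isClosed_subset isClosed_closure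
      (closure_mono support_indicator_subset)
  have hparts := (LipschitzWith.const (1 : ℝ)).integral_lineDeriv_mul_eq (μ := μ)
    (lipschitzWith_indicator_of_zero_frontier hs hlip hG0) hsupp (-v)
  have hin : ∀ x ∈ s, lineDeriv ℝ (s.indicator G) x v = fderiv ℝ G x v := fun x hx =>
    (eqOn_indicator.eventuallyEq_of_mem (hs.mem_nhds hx)).lineDeriv_eq.trans
      (hdiff x hx).lineDeriv_eq_fderiv
  have hout : ∀ᵐ x ∂μ, x ∉ s → lineDeriv ℝ (s.indicator G) x v = 0 := by
    filter_upwards [measure_eq_zero_iff_ae_notMem.1 (hconv.addHaar_frontier μ)] with x hx hxs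
    have hxc : x ∉ closure s := fun h => hx (hs.frontier_eq ▸ ⟨h, hxs⟩)
    have hzero : s.indicator G =ᶠ[nhds x] fun _ => 0 :=
      Filter.eventually_of_mem (isClosed_closure.isOpen_compl.mem_nhds hxc) fun y hy =>
        indicator_of_notMem (fun h => hy (subset_closure h)) G
    exact hzero.lineDeriv_eq.trans (by simp [lineDeriv])
  calc ∫ x in s, fderiv ℝ G x v ∂μ
      = ∫ x in s, lineDeriv ℝ (s.indicator G) x v ∂μ :=
        (setIntegral_congr_fun hs.measurableSet hin).symm
    _ = ∫ x, lineDeriv ℝ (s.indicator G) x v ∂μ :=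
        setIntegral_eq_integral_of_ae_compl_eq_zero hout
    _ = 0 := by simpa [lineDeriv] using hparts.symm

end ZeroBoundary

section Slices

variable {E : Type*} [NormedAddCommGroup E] [NormedSpace ℝ E] {G : E × ℝ → ℝ} {x : E} {t : ℝ}

lemma hasDerivAt_comp_prodMk_right (hG : DifferentiableAt ℝ G (x, t)) :
    HasDerivAt (fun r => G (x, r)) (fderiv ℝ G (x, t) (0, 1)) t :=
  hG.hasFDerivAt.comp_hasDerivAt t ((hasDerivAt_const t x).prodMk (hasDerivAt_id t))

lemma fderiv_comp_prodMk_left_apply (hG : DifferentiableAt ℝ G (x, t)) (v : E) :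
    fderiv ℝ (fun y => G (y, t)) x v = fderiv ℝ G (x, t) (v, 0) := by
  have hcomp : HasFDerivAt (fun y => G (y, t)) _ x :=
    hG.hasFDerivAt.comp x (hasFDerivAt_prodMk_left x t)
  simp [hcomp.fderiv]

lemma fderiv_apply_prodMk_one (G : E × ℝ → ℝ) (q : E × ℝ) (v : E) :
    fderiv ℝ G q (v, 1) = fderiv ℝ G q (0, 1) + fderiv ℝ G q (v, 0) := by
  rw [← map_add, Prod.mk_add_mk, zero_add, add_zero]

end Slices

section Cylinder

lemma setIntegral_prod_Ioo_eq_sub_of_hasDerivAt {X F : Type*} [MeasurableSpace X] {μ : Measure X}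
    [SFinite μ] [NormedAddCommGroup F] [NormedSpace ℝ F] [CompleteSpace F] {S : Set X}
    (hS : MeasurableSet S) {a b : ℝ} (hab : a ≤ b) {g g' : X × ℝ → F}
    (hg : ∀ x ∈ S, ContinuousOn (fun t => g (x, t)) (Icc a b))
    (hg' : ∀ x ∈ S, ∀ t ∈ Ioo a b, HasDerivAt (fun t => g (x, t)) (g' (x, t)) t)
    (hint : IntegrableOn g' (S ×ˢ Ioo a b) (μ.prod volume)) :
    ∫ q in S ×ˢ Ioo a b, g' q ∂(μ.prod volume) = ∫ x in S, (g (x, b) - g (x, a)) ∂μ := by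
  have hint' := hint
  rw [IntegrableOn, ← Measure.prod_restrict] at hint'
  rw [setIntegral_prod g' hint]
  refine setIntegral_congr_ae hS ?_
  filter_upwards [(ae_restrict_iff' hS).1 hint'.prod_right_ae] with x hx hxS
  rw [← integral_Ioc_eq_integral_Ioo, ← intervalIntegral.integral_of_le hab]
  exact intervalIntegral.integral_eq_sub_of_hasDerivAt_of_le hab (hg x hxS) (hg' x hxS)
    ((intervalIntegrable_iff_integrableOn_Ioo_of_le hab).2 (hx hxS))

lemma setIntegral_prod_fderiv_fst_eq_zero {E : Type*} [NormedAddCommGroup E] [NormedSpace ℝ E]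
    [FiniteDimensional ℝ E] [MeasurableSpace E] [BorelSpace E] {μ : Measure E}
    [μ.IsAddHaarMeasure] {S : Set E} (hS : IsOpen S) (hconv : Convex ℝ S)
    (hbdd : Bornology.IsBounded S) {a b : ℝ} {G : E × ℝ → ℝ}
    (hG : ContDiffOn ℝ 1 G (closure S ×ˢ Icc a b))
    (hG0 : ∀ x ∈ frontier S, ∀ t ∈ Ioo a b, G (x, t) = 0) (v : E) :
    ∫ q in S ×ˢ Ioo a b, fderiv ℝ G q (v, 0) ∂(μ.prod volume) = 0 := by
  have hsub : S ×ˢ Ioo a b ⊆ closure S ×ˢ Icc a b := prod_mono subset_closure Ioo_subset_Icc_self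
  have hopen : IsOpen (S ×ˢ Ioo a b) := hS.prod isOpen_Ioo
  have hint : IntegrableOn (fun q => fderiv ℝ G q (v, 0)) (S ×ˢ Ioo a b) (μ.prod volume) :=
    ((bddContOn_fderiv (hbdd.isCompact_closure.prod isCompact_Icc) hopen hsub hG).continuous_comp
      (φ := fun L => L (v, 0)) (by fun_prop)).integrableOn hopen.measurableSet
      (hbdd.prod (isBounded_Ioo a b)).measure_lt_top.ne
  rw [IntegrableOn, ← Measure.prod_restrict] at hint
  rw [← Measure.prod_restrict, integral_prod_symm _ hint]
  refine setIntegral_eq_zero_of_forall_eq_zero fun t ht => ?_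
  have hslice : ∀ x ∈ S, fderiv ℝ (fun y => G (y, t)) x v = fderiv ℝ G (x, t) (v, 0) :=
    fun x hx =>
      fderiv_comp_prodMk_left_apply (differentiableAt_of_contDiffOn hG hopen hsub ⟨hx, ht⟩) v
  calc ∫ x in S, fderiv ℝ G (x, t) (v, 0) ∂μ
      = ∫ x in S, fderiv ℝ (fun y => G (y, t)) x v ∂μ :=
        (setIntegral_congr_fun hS.measurableSet hslice).symm
    _ = 0 := setIntegral_fderiv_eq_zero_of_zero_frontier hS hconv hbdd
        (hG.comp (contDiff_prodMk_left t).contDiffOn fun x hx => ⟨hx, Ioo_subset_Icc_self ht⟩)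
        (fun x hx => hG0 x hx t ht) v

end Cylinder

section RegionBetween

variable {E : Type*} {a b : E → ℝ} {B : Set E}

/-- Interpolates linearly between the graphs of `a` and `b`. Its restriction to `B ×ˢ Ioo 0 1`
parametrizes the region between the graphs over `B`, and its Jacobian is `b - a`. -/
def graphInterp (a b : E → ℝ) (q : E × ℝ) : E × ℝ :=
  (q.1, a q.1 + (b q.1 - a q.1) * q.2)

lemma mapsTo_graphInterp_regionBetween (hab : ∀ x ∈ B, a x < b x) :
    MapsTo (graphInterp a b) (B ×ˢ Ioo 0 1) (regionBetween a b B) := by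
  rintro ⟨x, θ⟩ ⟨hx, hθ0, hθ1⟩
  have := hab x hx
  refine ⟨hx, ?_, ?_⟩ <;> simp only [graphInterp] <;> nlinarith

lemma mapsTo_graphInterp_closure [TopologicalSpace E] (hab : ∀ x ∈ B, a x < b x)
    (hinterp : ContinuousOn (graphInterp a b) (closure B ×ˢ univ)) :
    MapsTo (graphInterp a b) (closure B ×ˢ Icc 0 1) (closure (regionBetween a b B)) := by
  have hclosure : closure (B ×ˢ Ioo (0 : ℝ) 1) = closure B ×ˢ Icc 0 1 := by
    rw [closure_prod_eq, closure_Ioo zero_ne_one]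
  rw [← hclosure]
  exact (mapsTo_graphInterp_regionBetween hab).closure_of_continuousOn
    (hinterp.mono (hclosure ▸ prod_mono_right (subset_univ _)))

lemma setIntegral_Ioo_eq_mul_setIntegral_unit {y z : ℝ} (hyz : y ≤ z) (f : ℝ → ℝ) :
    ∫ r in Ioo y z, f r = ∫ θ in Ioo (0 : ℝ) 1, (z - y) * f (y + (z - y) * θ) := by
  have hscale := intervalIntegral.smul_integral_comp_add_mul (a := 0) (b := 1) f (z - y) y
  simpa [intervalIntegral.integral_of_le, hyz, integral_Ioc_eq_integral_Ioo, integral_const_mul]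
    using hscale.symm

lemma setIntegral_regionBetween_eq_graphInterp [MeasurableSpace E] {μ : Measure E} [SFinite μ]
    {f : E × ℝ → ℝ}
    (hB : MeasurableSet B) (hR : MeasurableSet (regionBetween a b B)) (hab : ∀ x ∈ B, a x ≤ b x)
    (hf : IntegrableOn f (regionBetween a b B) (μ.prod volume))
    (hf' : IntegrableOn (fun q => (b q.1 - a q.1) * f (graphInterp a b q)) (B ×ˢ Ioo 0 1)
      (μ.prod volume)) :
    ∫ z in regionBetween a b B, f z ∂(μ.prod volume) =
      ∫ q in B ×ˢ Ioo 0 1, (b q.1 - a q.1) * f (graphInterp a b q) ∂(μ.prod volume) := by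
  rw [← integral_indicator hR, integral_prod _ (hf.integrable_indicator hR),
    setIntegral_prod _ hf', ← integral_indicator hB]
  refine integral_congr_ae (.of_forall fun x => ?_)
  by_cases hx : x ∈ B
  · rw [indicator_of_mem hx]
    refine Eq.trans ?_ (setIntegral_Ioo_eq_mul_setIntegral_unit (hab x hx) fun r => f (x, r))
    rw [← integral_indicator measurableSet_Ioo]
    simp [regionBetween, indicator, hx]
  · simp [regionBetween, indicator, hx]

lemma isOpen_regionBetween [TopologicalSpace E] (hB : IsOpen B) (ha : ContinuousOn a B)
    (hb : ContinuousOn b B) : IsOpen (regionBetween a b B) := by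
  have hfst : MapsTo Prod.fst (B ×ˢ (univ : Set ℝ)) B := fun _ hq => hq.1
  have hgap : ContinuousOn (fun q : E × ℝ => (q.2 - a q.1, b q.1 - q.2)) (B ×ˢ univ) :=
    (continuousOn_snd.sub (ha.comp continuousOn_fst hfst)).prodMk
      ((hb.comp continuousOn_fst hfst).sub continuousOn_snd)
  convert hgap.isOpen_inter_preimage (hB.prod isOpen_univ)
    ((isOpen_Ioi (a := (0 : ℝ))).prod (isOpen_Ioi (a := (0 : ℝ)))) using 1
  ext ⟨x, r⟩
  simp [regionBetween]

lemma isBounded_regionBetween [PseudoMetricSpace E] [ProperSpace E] (hB : Bornology.IsBounded B)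
    (ha : ContinuousOn a (closure B)) (hb : ContinuousOn b (closure B)) :
    Bornology.IsBounded (regionBetween a b B) := by
  obtain ⟨m, hm⟩ := (hB.isCompact_closure.image_of_continuousOn ha).bddBelow
  obtain ⟨n, hn⟩ := (hB.isCompact_closure.image_of_continuousOn hb).bddAbove
  refine (hB.prod (isBounded_Ioo m n)).subset fun q hq => ⟨hq.1, ?_, ?_⟩
  · exact (hm (mem_image_of_mem a (subset_closure hq.1))).trans_lt hq.2.1
  · exact hq.2.2.trans_le (hn (mem_image_of_mem b (subset_closure hq.1)))

end RegionBetween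

section GraphFlux

variable {E : Type*} [NormedAddCommGroup E] [NormedSpace ℝ E] {a b : E → ℝ} {B : Set E}
  {F : E × ℝ → ℝ}

/-- The conormal `dr - Db` of the graph `r = b x` over `x`, pointing upwards. Its Euclidean norm
is the area element of the graph. -/
def graphConormal (b : E → ℝ) (x : E) : E × ℝ →L[ℝ] ℝ :=
  ContinuousLinearMap.snd ℝ E ℝ - (fderiv ℝ b x).comp (ContinuousLinearMap.fst ℝ E ℝ)

lemma graphConormal_apply (b : E → ℝ) (x : E) (w : E × ℝ) :
    graphConormal b x w = w.2 - fderiv ℝ b x w.1 := rfl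

lemma hasFDerivAt_comp_graphInterp {x : E} {θ : ℝ} (ha : DifferentiableAt ℝ a x)
    (hb : DifferentiableAt ℝ b x) (hF : DifferentiableAt ℝ F (graphInterp a b (x, θ))) :
    HasFDerivAt (fun q => F (graphInterp a b q)) ((fderiv ℝ F (graphInterp a b (x, θ))).comp
      ((ContinuousLinearMap.fst ℝ E ℝ).prod ((fderiv ℝ a x).comp (ContinuousLinearMap.fst ℝ E ℝ) +
        ((b x - a x) • ContinuousLinearMap.snd ℝ E ℝ +
          θ • (fderiv ℝ b x - fderiv ℝ a x).comp (ContinuousLinearMap.fst ℝ E ℝ))))) (x, θ) := by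
  have hfst : HasFDerivAt Prod.fst (ContinuousLinearMap.fst ℝ E ℝ) (x, θ) := hasFDerivAt_fst
  have haq := ha.hasFDerivAt.comp (x, θ) hfst
  have hbq := hb.hasFDerivAt.comp (x, θ) hfst
  exact hF.hasFDerivAt.comp (x, θ) (hfst.prodMk (haq.add ((hbq.sub haq).mul hasFDerivAt_snd)))

/-- The idea of flattening: up to a horizontal derivative of a function vanishing with the
thickness `b - a`, the derivative of `F` along `w` is the derivative in `θ` of the flux of `F w`
through the interpolated graphs. -/
lemma hasDerivAt_comp_graphInterp_mul_graphConormal {x : E} {θ : ℝ} (ha : DifferentiableAt ℝ a x)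
    (hb : DifferentiableAt ℝ b x) (hF : DifferentiableAt ℝ F (graphInterp a b (x, θ))) (w : E × ℝ) :
    HasDerivAt (fun θ => F (graphInterp a b (x, θ)) *
        ((1 - θ) * graphConormal a x w + θ * graphConormal b x w))
      ((b x - a x) * fderiv ℝ F (graphInterp a b (x, θ)) w -
        fderiv ℝ (fun q => (b q.1 - a q.1) * F (graphInterp a b q)) (x, θ) (w.1, 0)) θ := by
  have hcomp := hasFDerivAt_comp_graphInterp ha hb hF
  have hfst : HasFDerivAt Prod.fst (ContinuousLinearMap.fst ℝ E ℝ) (x, θ) := hasFDerivAt_fst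
  have hthick := ((hb.hasFDerivAt.comp (x, θ) hfst).sub (ha.hasFDerivAt.comp (x, θ) hfst)).mul hcomp
  have hvert := hcomp.comp_hasDerivAt θ ((hasDerivAt_const θ x).prodMk (hasDerivAt_id θ))
  have hconormal : HasDerivAt (fun θ => (1 - θ) * graphConormal a x w + θ * graphConormal b x w)
      (-1 * graphConormal a x w + 1 * graphConormal b x w) θ :=
    (((hasDerivAt_id θ).const_sub 1).mul_const _).add ((hasDerivAt_id θ).mul_const _)
  refine (hvert.mul hconormal).congr_deriv ?_
  have hsplit : ∀ v c, fderiv ℝ F (graphInterp a b (x, θ)) (v, c) =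
      fderiv ℝ F (graphInterp a b (x, θ)) (v, 0) +
        c * fderiv ℝ F (graphInterp a b (x, θ)) (0, 1) := by
    intro v c
    rw [← smul_eq_mul, ← map_smul, ← map_add]
    simp
  rw [show fderiv ℝ (fun q : E × ℝ => (b q.1 - a q.1) * F (graphInterp a b q)) (x, θ) = _ from
    hthick.fderiv]
  simp only [graphConormal_apply, Function.comp_apply, ContinuousLinearMap.comp_apply,
    _root_.add_apply, _root_.smul_apply, _root_.sub_apply, ContinuousLinearMap.prod_apply,
    ContinuousLinearMap.coe_fst', ContinuousLinearMap.coe_snd', smul_eq_mul, map_zero,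
    Pi.sub_apply]
  rw [show fderiv ℝ F (graphInterp a b (x, θ)) w = _ from hsplit w.1 w.2, hsplit w.1 (_ + _),
    hsplit 0 (_ + _), Prod.mk_zero_zero, map_zero]
  ring

lemma contDiffOn_graphInterp {S : Set E} {n : WithTop ℕ∞} (ha : ContDiffOn ℝ n a S)
    (hb : ContDiffOn ℝ n b S) : ContDiffOn ℝ n (graphInterp a b) (S ×ˢ univ) := by
  have hfst : MapsTo Prod.fst (S ×ˢ (univ : Set ℝ)) S := fun _ hq => hq.1
  have haq := ha.comp contDiffOn_fst hfst
  exact contDiffOn_fst.prodMk (haq.add (((hb.comp contDiffOn_fst hfst).sub haq).mul contDiffOn_snd))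

lemma contDiffOn_sub_mul_comp_graphInterp {n : WithTop ℕ∞} (hab : ∀ x ∈ B, a x < b x)
    (ha : ContDiffOn ℝ n a (closure B)) (hb : ContDiffOn ℝ n b (closure B))
    (hF : ContDiffOn ℝ n F (closure (regionBetween a b B))) :
    ContDiffOn ℝ n (fun q => (b q.1 - a q.1) * F (graphInterp a b q)) (closure B ×ˢ Icc 0 1) :=
  have hfst : MapsTo Prod.fst (closure B ×ˢ Icc (0 : ℝ) 1) (closure B) := fun _ hq => hq.1
  have hinterp := contDiffOn_graphInterp ha hb
  ((hb.comp contDiffOn_fst hfst).sub (ha.comp contDiffOn_fst hfst)).mul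
    (hF.comp (hinterp.mono (prod_mono_right (subset_univ _)))
      (mapsTo_graphInterp_closure hab hinterp.continuousOn))

variable [FiniteDimensional ℝ E] [MeasurableSpace E] [BorelSpace E] {μ : Measure E}
  [μ.IsAddHaarMeasure]

lemma setIntegral_graphInterp_fderiv (hB : IsOpen B) (hconv : Convex ℝ B)
    (hbdd : Bornology.IsBounded B) (ha : ContDiffOn ℝ 1 a (closure B))
    (hb : ContDiffOn ℝ 1 b (closure B)) (hab : ∀ x ∈ B, a x < b x)
    (hab0 : ∀ x ∈ frontier B, a x = b x)
    (hF : ContDiffOn ℝ 1 F (closure (regionBetween a b B))) (w : E × ℝ)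
    (hint : IntegrableOn (fun q => (b q.1 - a q.1) * fderiv ℝ F (graphInterp a b q) w)
      (B ×ˢ Ioo 0 1) (μ.prod volume)) :
    ∫ q in B ×ˢ Ioo 0 1, (b q.1 - a q.1) * fderiv ℝ F (graphInterp a b q) w ∂(μ.prod volume) =
      ∫ x in B, (F (x, b x) * graphConormal b x w - F (x, a x) * graphConormal a x w) ∂μ := by
  have hcyl : IsOpen (B ×ˢ Ioo (0 : ℝ) 1) := hB.prod isOpen_Ioo
  have hR : IsOpen (regionBetween a b B) := isOpen_regionBetween hB
    (ha.continuousOn.mono subset_closure) (hb.continuousOn.mono subset_closure)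
  have hG := contDiffOn_sub_mul_comp_graphInterp hab ha hb hF
  have hGint : IntegrableOn (fun q => fderiv ℝ (fun q : E × ℝ =>
      (b q.1 - a q.1) * F (graphInterp a b q)) q (w.1, 0)) (B ×ˢ Ioo 0 1) (μ.prod volume) :=
    ((bddContOn_fderiv (hbdd.isCompact_closure.prod isCompact_Icc) hcyl
      (prod_mono subset_closure Ioo_subset_Icc_self) hG).continuous_comp
      (φ := fun L => L (w.1, 0)) (by fun_prop)).integrableOn hcyl.measurableSet
      (hbdd.prod (isBounded_Ioo 0 1)).measure_lt_top.ne
  have hhorizontal := setIntegral_prod_fderiv_fst_eq_zero (μ := μ) hB hconv hbdd hG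
    (fun x hx t _ => by simp [hab0 x hx]) w.1
  refine (sub_zero _).symm.trans ((congrArg _ hhorizontal.symm).trans ?_)
  rw [← integral_sub hint hGint]
  refine (setIntegral_prod_Ioo_eq_sub_of_hasDerivAt hB.measurableSet zero_le_one (g := fun q =>
    F (graphInterp a b q) * ((1 - q.2) * graphConormal a q.1 w + q.2 * graphConormal b q.1 w))
    (fun x hx => ?_) (fun x hx θ hθ => ?_) (hint.sub hGint)).trans ?_
  · have hslice : ContinuousOn (fun θ => F (graphInterp a b (x, θ))) (Icc 0 1) :=
      hF.continuousOn.comp (by simp only [graphInterp]; fun_prop) fun θ hθ =>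
        mapsTo_graphInterp_closure hab (contDiffOn_graphInterp ha hb).continuousOn
          ⟨subset_closure hx, hθ⟩
    exact hslice.mul (by dsimp only; fun_prop)
  · exact hasDerivAt_comp_graphInterp_mul_graphConormal
      (differentiableAt_of_contDiffOn ha hB subset_closure hx)
      (differentiableAt_of_contDiffOn hb hB subset_closure hx)
      (differentiableAt_of_contDiffOn hF hR subset_closure
        (mapsTo_graphInterp_regionBetween hab ⟨hx, hθ⟩)) w
  · simp [graphInterp]

theorem setIntegral_regionBetween_fderiv (hB : IsOpen B) (hconv : Convex ℝ B)
    (hbdd : Bornology.IsBounded B) (ha : ContDiffOn ℝ 1 a (closure B))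
    (hb : ContDiffOn ℝ 1 b (closure B)) (hab : ∀ x ∈ B, a x < b x)
    (hab0 : ∀ x ∈ frontier B, a x = b x)
    (hF : ContDiffOn ℝ 1 F (closure (regionBetween a b B))) (w : E × ℝ) :
    ∫ z in regionBetween a b B, fderiv ℝ F z w ∂(μ.prod volume) =
      ∫ x in B, (F (x, b x) * graphConormal b x w - F (x, a x) * graphConormal a x w) ∂μ := by
  have hR : IsOpen (regionBetween a b B) := isOpen_regionBetween hB
    (ha.continuousOn.mono subset_closure) (hb.continuousOn.mono subset_closure)
  have hRb := isBounded_regionBetween hbdd ha.continuousOn hb.continuousOn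
  have hcyl : IsOpen (B ×ˢ Ioo (0 : ℝ) 1) := hB.prod isOpen_Ioo
  have hDF : BddContOn (fun z => fderiv ℝ F z w) (regionBetween a b B) :=
    (bddContOn_fderiv hRb.isCompact_closure hR subset_closure hF).continuous_comp
      (φ := fun L => L w) (by fun_prop)
  have hinterp : ContinuousOn (graphInterp a b) (B ×ˢ Ioo 0 1) :=
    (contDiffOn_graphInterp ha hb).continuousOn.mono (prod_mono subset_closure (subset_univ _))
  have hthick : BddContOn (fun q : E × ℝ => b q.1 - a q.1) (B ×ˢ Ioo 0 1) :=
    (BddContOn.of_isCompact hbdd.isCompact_closure (hb.continuousOn.sub ha.continuousOn)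
      subset_closure).comp continuousOn_fst fun _ hq => hq.1
  have hint : IntegrableOn (fun q => (b q.1 - a q.1) * fderiv ℝ F (graphInterp a b q) w)
      (B ×ˢ Ioo 0 1) (μ.prod volume) :=
    ((hthick.prodMk (hDF.comp hinterp (mapsTo_graphInterp_regionBetween hab))).continuous_comp
      continuous_mul).integrableOn hcyl.measurableSet
      (hbdd.prod (isBounded_Ioo 0 1)).measure_lt_top.ne
  rw [setIntegral_regionBetween_eq_graphInterp hB.measurableSet hR.measurableSet
    (fun x hx => (hab x hx).le) (hDF.integrableOn hR.measurableSet hRb.measure_lt_top.ne) hint]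
  exact setIntegral_graphInterp_fderiv hB hconv hbdd ha hb hab hab0 hF w hint

end GraphFlux

section Divergence

variable {E F : Type*} [NormedAddCommGroup E] [NormedSpace ℝ E] [NormedAddCommGroup F]
  [NormedSpace ℝ F] {V : E → E} {x : E}

/-- The divergence of a vector field: the trace of its Jacobian. -/
def divergence (V : E → E) (x : E) : ℝ :=
  LinearMap.trace ℝ E (fderiv ℝ V x)

lemma divergence_eq_sum_repr {ι : Type*} [Fintype ι] (e : Module.Basis ι ℝ E) :
    divergence V x = ∑ i, e.repr (fderiv ℝ V x (e i)) i := by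
  classical
  rw [divergence, LinearMap.trace_eq_matrix_trace ℝ e]
  simp only [Matrix.trace, Matrix.diag_apply, LinearMap.toMatrix_apply, ContinuousLinearMap.coe_coe]

lemma divergence_smul [FiniteDimensional ℝ E] {g : E → ℝ} (hg : DifferentiableAt ℝ g x)
    (hV : DifferentiableAt ℝ V x) :
    divergence (fun y => g y • V y) x = g x * divergence V x + fderiv ℝ g x (V x) := by
  have htrace : LinearMap.trace ℝ E ((fderiv ℝ g x).smulRight (V x)) = fderiv ℝ g x (V x) :=
    LinearMap.trace_smulRight _ _
  rw [divergence, fderiv_fun_smul hg hV, ContinuousLinearMap.toLinearMap_add,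
    ContinuousLinearMap.toLinearMap_smul, map_add, map_smul, htrace, smul_eq_mul, divergence]

lemma divergence_conj (L : E ≃L[ℝ] F) (V : F → F) (x : E) :
    divergence (fun y => L.symm (V (L y))) x = divergence V (L x) := by
  have hderiv : fderiv ℝ (fun y => L.symm (V (L y))) x =
      (L.symm : F →L[ℝ] E).comp ((fderiv ℝ V (L x)).comp (L : E →L[ℝ] F)) := by
    rw [← L.comp_right_fderiv, ← L.symm.comp_fderiv]
    rfl
  rw [divergence, hderiv, divergence, ← LinearMap.trace_conj' _ L.symm.toLinearEquiv]
  rfl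

lemma abs_divergence_le {E : Type*} [NormedAddCommGroup E] [InnerProductSpace ℝ E]
    [FiniteDimensional ℝ E] (V : E → E) (x : E) :
    |divergence V x| ≤ Module.finrank ℝ E * ‖fderiv ℝ V x‖ := by
  rw [divergence, LinearMap.trace_eq_sum_inner _ (stdOrthonormalBasis ℝ E)]
  refine (Finset.abs_sum_le_sum_abs _ _).trans ((Finset.sum_le_card_nsmul _ _ ‖fderiv ℝ V x‖
    fun i _ => ?_).trans (by simp))
  calc |⟪stdOrthonormalBasis ℝ E i, fderiv ℝ V x (stdOrthonormalBasis ℝ E i)⟫|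
      ≤ ‖stdOrthonormalBasis ℝ E i‖ * ‖fderiv ℝ V x (stdOrthonormalBasis ℝ E i)‖ :=
        abs_real_inner_le_norm _ _
    _ ≤ ‖fderiv ℝ V x‖ := by
        simpa using (fderiv ℝ V x).le_opNorm (stdOrthonormalBasis ℝ E i)

lemma bddContOn_divergence [FiniteDimensional ℝ E] {K O : Set E} (hK : IsCompact K)
    (hO : IsOpen O) (hOK : O ⊆ K) (hV : ContDiffOn ℝ 1 V K) : BddContOn (divergence V) O :=
  (bddContOn_fderiv hK hO hOK hV).continuous_comp
    (φ := LinearMap.trace ℝ E ∘ₗ ContinuousLinearMap.coeLM ℝ)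
    (LinearMap.continuous_of_finiteDimensional _)

lemma fderiv_coord_comp {ι : Type*} (e : Module.Basis ι ℝ E) [FiniteDimensional ℝ E]
    (hV : DifferentiableAt ℝ V x) (i : ι) (w : E) :
    fderiv ℝ (fun y => e.repr (V y) i) x w = e.repr (fderiv ℝ V x w) i := by
  have hcoord := (LinearMap.toContinuousLinearMap (e.coord i)).hasFDerivAt.comp x hV.hasFDerivAt
  exact congrArg (fun L => L w) hcoord.fderiv

lemma sum_repr_mul_map {ι : Type*} [Fintype ι] (e : Module.Basis ι ℝ E) (L : E →L[ℝ] ℝ) (v : E) :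
    ∑ i, e.repr v i * L (e i) = L v := by
  conv_rhs => rw [← e.sum_repr v, map_sum]
  simp only [map_smul, smul_eq_mul]

end Divergence

section GraphDivergence

variable {E : Type*} [NormedAddCommGroup E] [NormedSpace ℝ E] {a b : E → ℝ} {B : Set E}

lemma mapsTo_graph_closure_regionBetween (hab : ∀ x ∈ B, a x < b x)
    (ha : ContDiffOn ℝ 1 a (closure B)) (hb : ContDiffOn ℝ 1 b (closure B)) :
    MapsTo (fun x => (x, a x)) B (closure (regionBetween a b B)) ∧
      MapsTo (fun x => (x, b x)) B (closure (regionBetween a b B)) := by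
  have hinterp := mapsTo_graphInterp_closure hab (contDiffOn_graphInterp ha hb).continuousOn
  refine ⟨fun x hx => ?_, fun x hx => ?_⟩
  · simpa [graphInterp] using hinterp (x := (x, 0)) ⟨subset_closure hx, left_mem_Icc.2 zero_le_one⟩
  · simpa [graphInterp] using hinterp (x := (x, 1)) ⟨subset_closure hx, right_mem_Icc.2 zero_le_one⟩

variable [FiniteDimensional ℝ E]

lemma bddContOn_graphConormal (hB : IsOpen B) (hbdd : Bornology.IsBounded B)
    (hb : ContDiffOn ℝ 1 b (closure B)) : BddContOn (graphConormal b) B :=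
  (bddContOn_fderiv hbdd.isCompact_closure hB subset_closure hb).continuous_comp
    (φ := fun L => ContinuousLinearMap.snd ℝ E ℝ - L.comp (ContinuousLinearMap.fst ℝ E ℝ))
    (by fun_prop)

variable [MeasurableSpace E] [BorelSpace E] {μ : Measure E}

lemma integrableOn_mul_graphConormal [IsFiniteMeasureOnCompacts μ] {c : E → ℝ} {F : E × ℝ → ℝ}
    {S : Set (E × ℝ)} (hB : IsOpen B) (hbdd : Bornology.IsBounded B)
    (hc : ContDiffOn ℝ 1 c (closure B)) (hS : IsCompact S)
    (hcS : MapsTo (fun x => (x, c x)) B S) (hF : ContinuousOn F S) (w : E × ℝ) :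
    IntegrableOn (fun x => F (x, c x) * graphConormal c x w) B μ := by
  have hgraph : ContinuousOn (fun x => (x, c x)) B :=
    continuousOn_id.prodMk (hc.continuousOn.mono subset_closure)
  exact ((((BddContOn.of_isCompact hS hF subset_rfl).comp hgraph hcS).prodMk
    (bddContOn_graphConormal hB hbdd hc)).continuous_comp (φ := fun q => q.1 * q.2 w)
    (by fun_prop)).integrableOn hB.measurableSet (hbdd.measure_lt_top (μ := μ)).ne

theorem setIntegral_regionBetween_divergence [μ.IsAddHaarMeasure] {V : E × ℝ → E × ℝ}
    (hB : IsOpen B) (hconv : Convex ℝ B) (hbdd : Bornology.IsBounded B)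
    (ha : ContDiffOn ℝ 1 a (closure B)) (hb : ContDiffOn ℝ 1 b (closure B))
    (hab : ∀ x ∈ B, a x < b x) (hab0 : ∀ x ∈ frontier B, a x = b x)
    (hV : ContDiffOn ℝ 1 V (closure (regionBetween a b B))) :
    ∫ z in regionBetween a b B, divergence V z ∂(μ.prod volume) =
      ∫ x in B, (graphConormal b x (V (x, b x)) - graphConormal a x (V (x, a x))) ∂μ := by
  have hR : IsOpen (regionBetween a b B) := isOpen_regionBetween hB
    (ha.continuousOn.mono subset_closure) (hb.continuousOn.mono subset_closure)
  have hRb := isBounded_regionBetween hbdd ha.continuousOn hb.continuousOn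
  obtain ⟨haR, hbR⟩ := mapsTo_graph_closure_regionBetween hab ha hb
  let e := Module.finBasis ℝ (E × ℝ)
  have hcoord : ∀ i, ContDiffOn ℝ 1 (fun z => e.repr (V z) i) (closure (regionBetween a b B)) :=
    fun i => (LinearMap.toContinuousLinearMap (e.coord i)).contDiff.comp_contDiffOn hV
  have hdiv : ∀ z ∈ regionBetween a b B,
      divergence V z = ∑ i, fderiv ℝ (fun z => e.repr (V z) i) z (e i) := by
    intro z hz
    have hVz := differentiableAt_of_contDiffOn hV hR subset_closure hz
    rw [divergence_eq_sum_repr e]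
    exact Finset.sum_congr rfl fun i _ => (fderiv_coord_comp e hVz i (e i)).symm
  have hint : ∀ i, IntegrableOn (fun z => fderiv ℝ (fun z => e.repr (V z) i) z (e i))
      (regionBetween a b B) (μ.prod volume) := fun i =>
    ((bddContOn_fderiv hRb.isCompact_closure hR subset_closure (hcoord i)).continuous_comp
      (φ := fun L => L (e i)) (by fun_prop)).integrableOn hR.measurableSet hRb.measure_lt_top.ne
  have hflux : ∀ i, IntegrableOn (fun x => e.repr (V (x, b x)) i * graphConormal b x (e i) -
      e.repr (V (x, a x)) i * graphConormal a x (e i)) B μ := fun i =>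
    (integrableOn_mul_graphConormal hB hbdd hb hRb.isCompact_closure hbR
      (hcoord i).continuousOn (e i)).sub
    (integrableOn_mul_graphConormal hB hbdd ha hRb.isCompact_closure haR
      (hcoord i).continuousOn (e i))
  rw [setIntegral_congr_fun hR.measurableSet hdiv, integral_finsetSum _ fun i _ => hint i]
  simp only [setIntegral_regionBetween_fderiv hB hconv hbdd ha hb hab hab0 (hcoord _)]
  rw [← integral_finsetSum _ fun i _ => hflux i]
  simp only [Finset.sum_sub_distrib, sum_repr_mul_map]

end GraphDivergence

section GraphDomain

variable {d : ℕ} {ρ : ℝ} {ℓ ℓt m : Esp d → ℝ}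

lemma graphMk_castSucc (x : Esp d) (r : ℝ) (i : Fin d) : graphMk d x r i.castSucc = x i := by
  simp [graphMk]

lemma graphMk_last (x : Esp d) (r : ℝ) : graphMk d x r (Fin.last d) = r := by
  simp [graphMk]

/-- The identification of `ℝ^d × ℝ` with `ℝ^(d+1)` by `graphMk`, as a linear isometry for the
Euclidean product norm. -/
def graphIsometry (d : ℕ) : WithLp 2 (Esp d × ℝ) ≃ₗᵢ[ℝ] Esp (d + 1) where
  toFun q := graphMk d q.fst q.snd
  invFun z := WithLp.toLp 2 (WithLp.toLp 2 fun i => z i.castSucc, z (Fin.last d))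
  map_add' p q := by
    ext i
    refine Fin.lastCases ?_ (fun i => ?_) i <;> simp [graphMk_castSucc, graphMk_last]
  map_smul' c q := by
    ext i
    refine Fin.lastCases ?_ (fun i => ?_) i <;> simp [graphMk_castSucc, graphMk_last]
  left_inv q := by
    simp only [graphMk_castSucc, graphMk_last]
    rfl
  right_inv z := by
    ext i
    refine Fin.lastCases ?_ (fun i => ?_) i <;> simp [graphMk_castSucc, graphMk_last]
  norm_map' q := by
    simp [EuclideanSpace.norm_eq, WithLp.prod_norm_eq_of_L2, Fin.sum_univ_castSucc,
      graphMk_castSucc, graphMk_last, Real.sq_sqrt, Finset.sum_nonneg, sq_nonneg]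

/-- `graphMk` as a linear homeomorphism. -/
def graphEquiv (d : ℕ) : (Esp d × ℝ) ≃L[ℝ] Esp (d + 1) :=
  (WithLp.prodContinuousLinearEquiv 2 ℝ (Esp d) ℝ).symm.trans
    (graphIsometry d).toContinuousLinearEquiv

lemma graphEquiv_apply (q : Esp d × ℝ) : graphEquiv d q = graphMk d q.1 q.2 := rfl

lemma measurePreserving_graphEquiv (d : ℕ) : MeasurePreserving (graphEquiv d) :=
  (graphIsometry d).measurePreserving.comp (WithLp.volume_preserving_toLp (Esp d) ℝ)

lemma inner_graphMk (x y : Esp d) (r s : ℝ) :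
    ⟪graphMk d x r, graphMk d y s⟫ = ⟪x, y⟫ + r * s := by
  simp [PiLp.inner_apply, Fin.sum_univ_castSucc, graphMk_castSucc, graphMk_last, mul_comm]

lemma graphDomain_eq_image : graphDomain d ρ ℓ ℓt =
    graphEquiv d '' regionBetween (fun y => ℓ y - ℓt y) ℓ (ball 0 ρ) := by
  ext z
  simp [graphDomain, regionBetween, graphEquiv_apply, and_assoc, eq_comm]

lemma closure_graphDomain_eq_image : closure (graphDomain d ρ ℓ ℓt) =
    graphEquiv d '' closure (regionBetween (fun y => ℓ y - ℓt y) ℓ (ball 0 ρ)) := by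
  rw [graphDomain_eq_image, (graphEquiv d).image_closure]

lemma isOpen_graphDomain (hℓ : ContinuousOn ℓ (ball 0 ρ)) (hℓt : ContinuousOn ℓt (ball 0 ρ)) :
    IsOpen (graphDomain d ρ ℓ ℓt) := by
  rw [graphDomain_eq_image]
  exact (graphEquiv d).toHomeomorph.isOpenMap _ (isOpen_regionBetween isOpen_ball (hℓ.sub hℓt) hℓ)

lemma isBounded_graphDomain (hℓ : ContinuousOn ℓ (closedBall 0 ρ))
    (hℓt : ContinuousOn ℓt (closedBall 0 ρ)) : Bornology.IsBounded (graphDomain d ρ ℓ ℓt) := by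
  rw [graphDomain_eq_image]
  have hle := closure_ball_subset_closedBall (x := (0 : Esp d)) (ε := ρ)
  exact (graphEquiv d).lipschitz.isBounded_image
    (isBounded_regionBetween isBounded_ball ((hℓ.sub hℓt).mono hle) (hℓ.mono hle))

lemma setIntegral_graphDomain (f : Esp (d + 1) → ℝ) :
    ∫ z in graphDomain d ρ ℓ ℓt, f z =
      ∫ q in regionBetween (fun y => ℓ y - ℓt y) ℓ (ball 0 ρ), f (graphEquiv d q) := by
  rw [graphDomain_eq_image]
  exact (measurePreserving_graphEquiv d).setIntegral_image_emb
    (graphEquiv d).toHomeomorph.measurableEmbedding f _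

lemma omegaW_pos (m : Esp d → ℝ) (x : Esp d) : 0 < omegaW d m x := by
  unfold omegaW
  positivity

lemma norm_nuUp (m : Esp d → ℝ) (x : Esp d) : ‖nuUp d m x‖ = 1 := by
  have hgraph : ‖graphMk d (-gradient m x) 1‖ = omegaW d m x := by
    rw [norm_eq_sqrt_real_inner, inner_graphMk, inner_neg_neg, real_inner_self_eq_norm_sq,
      mul_one, add_comm, omegaW]
  rw [nuUp, norm_smul, norm_inv, Real.norm_of_nonneg (Real.sqrt_nonneg _), hgraph]
  exact inv_mul_cancel₀ (omegaW_pos m x).ne'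

lemma nuDown_eq_neg_nuUp (m : Esp d → ℝ) (x : Esp d) : nuDown d m x = -nuUp d m x := by
  ext i
  refine Fin.lastCases ?_ (fun i => ?_) i <;>
    simp [nuUp, nuDown, graphMk_castSucc, graphMk_last]

lemma norm_nuDown (m : Esp d → ℝ) (x : Esp d) : ‖nuDown d m x‖ = 1 := by
  rw [nuDown_eq_neg_nuUp, norm_neg, norm_nuUp]

lemma omegaW_mul_inner_nuUp (m : Esp d → ℝ) (x : Esp d) (w : Esp (d + 1)) :
    omegaW d m x * ⟪w, nuUp d m x⟫ = graphConormal m x ((graphEquiv d).symm w) := by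
  obtain ⟨q, rfl⟩ := (graphEquiv d).surjective w
  have hnu : omegaW d m x • nuUp d m x = graphMk d (-gradient m x) 1 :=
    smul_inv_smul₀ (omegaW_pos m x).ne' _
  rw [← real_inner_smul_right, hnu, graphEquiv_apply, inner_graphMk, ← graphEquiv_apply,
    ContinuousLinearEquiv.symm_apply_apply, graphConormal_apply, inner_neg_right,
    real_inner_comm, inner_gradient_left]
  ring

lemma omegaW_mul_inner_nuDown (m : Esp d → ℝ) (x : Esp d) (w : Esp (d + 1)) :
    omegaW d m x * ⟪w, nuDown d m x⟫ = -graphConormal m x ((graphEquiv d).symm w) := by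
  rw [nuDown_eq_neg_nuUp, inner_neg_right, mul_neg, omegaW_mul_inner_nuUp]

end GraphDomain

section GaussBoundary

/-- A piece of a parametrized hypersurface of `E`: the parametrization, the unit normal field and
the area element, all as functions of the parameter. -/
structure BoundaryPatch (X E : Type*) where
  param : X → E
  normal : X → E
  area : X → ℝ

/-- The patches `S i`, parametrized by `B ⊆ X`, make up enough of the boundary of `D` for the
divergence theorem to hold on `D`, and are regular enough for the boundary integrals to exist. -/
structure IsGaussBoundary {ι X E : Type*} [Fintype ι] [TopologicalSpace X] [MeasurableSpace X]
    [NormedAddCommGroup E] [InnerProductSpace ℝ E] [MeasureSpace E] (D : Set E)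
    (S : ι → BoundaryPatch X E) (B : Set X) (ν : Measure X) : Prop where
  mapsTo_param : ∀ i, MapsTo (S i).param B (closure D)
  continuousOn_param : ∀ i, ContinuousOn (S i).param B
  continuousOn_normal : ∀ i, ContinuousOn (S i).normal B
  norm_normal : ∀ i, ∀ y ∈ B, ‖(S i).normal y‖ = 1
  bddContOn_area : ∀ i, BddContOn (S i).area B
  area_nonneg : ∀ i, ∀ y ∈ B, 0 ≤ (S i).area y
  setIntegral_divergence : ∀ W : E → E, ContDiffOn ℝ 1 W (closure D) →
    ∫ x in D, divergence W x = ∫ y in B, ∑ i, (S i).area y * ⟪W ((S i).param y), (S i).normal y⟫ ∂ν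

end GaussBoundary

section GraphPatch

variable {d : ℕ} {ρ : ℝ} {ℓ ℓt m : Esp d → ℝ}

/-- The upper and the lower graph bounding `graphDomain`. -/
def graphPatch (d : ℕ) (ℓ ℓt : Esp d → ℝ) : Fin 2 → BoundaryPatch (Esp d) (Esp (d + 1)) :=
  ![⟨fun y => graphMk d y (ℓ y), nuUp d ℓ, omegaW d ℓ⟩,
    ⟨fun y => graphMk d y (ℓ y - ℓt y), nuDown d fun z => ℓ z - ℓt z, omegaW d fun z => ℓ z - ℓt z⟩]

lemma continuousOn_graphMk {B : Set (Esp d)} {v : Esp d → Esp d} {r : Esp d → ℝ}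
    (hv : ContinuousOn v B) (hr : ContinuousOn r B) :
    ContinuousOn (fun y => graphMk d (v y) (r y)) B :=
  (graphEquiv d).continuous.comp_continuousOn (hv.prodMk hr)

lemma bddContOn_gradient (hm : ContDiffOn ℝ 1 m (closedBall 0 ρ)) :
    BddContOn (gradient m) (ball 0 ρ) :=
  (bddContOn_fderiv (isCompact_closedBall 0 ρ) isOpen_ball ball_subset_closedBall
    hm).continuous_comp (φ := (InnerProductSpace.toDual ℝ (Esp d)).symm) (by fun_prop)

lemma bddContOn_omegaW (hm : ContDiffOn ℝ 1 m (closedBall 0 ρ)) :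
    BddContOn (omegaW d m) (ball 0 ρ) :=
  (bddContOn_gradient hm).continuous_comp (φ := fun v => Real.sqrt (1 + ‖v‖ ^ 2)) (by fun_prop)

lemma continuousOn_nuUp (hm : ContDiffOn ℝ 1 m (closedBall 0 ρ)) :
    ContinuousOn (nuUp d m) (ball 0 ρ) :=
  ((bddContOn_omegaW hm).continuousOn.inv₀ fun x _ => (omegaW_pos m x).ne').smul
    (continuousOn_graphMk (bddContOn_gradient hm).continuousOn.neg continuousOn_const)

lemma continuousOn_nuDown (hm : ContDiffOn ℝ 1 m (closedBall 0 ρ)) :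
    ContinuousOn (nuDown d m) (ball 0 ρ) :=
  (continuousOn_nuUp hm).neg.congr fun x _ => nuDown_eq_neg_nuUp m x

lemma setIntegral_graphDomain_divergence (hρ : 0 < ρ) (hℓ : ContDiffOn ℝ 1 ℓ (closedBall 0 ρ))
    (hℓt : ContDiffOn ℝ 1 ℓt (closedBall 0 ρ)) (hpos : ∀ y, ‖y‖ < ρ → 0 < ℓt y)
    (hzero : ∀ y, ‖y‖ = ρ → ℓt y = 0) {W : Esp (d + 1) → Esp (d + 1)}
    (hW : ContDiffOn ℝ 1 W (closure (graphDomain d ρ ℓ ℓt))) :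
    ∫ x in graphDomain d ρ ℓ ℓt, divergence W x =
      ∫ y in ball 0 ρ, (omegaW d ℓ y * ⟪W (graphMk d y (ℓ y)), nuUp d ℓ y⟫ +
        omegaW d (fun z => ℓ z - ℓt z) y *
          ⟪W (graphMk d y (ℓ y - ℓt y)), nuDown d (fun z => ℓ z - ℓt z) y⟫) := by
  have hV : ContDiffOn ℝ 1 (fun q => (graphEquiv d).symm (W (graphEquiv d q)))
      (closure (regionBetween (fun y => ℓ y - ℓt y) ℓ (ball 0 ρ))) :=
    (graphEquiv d).symm.contDiff.comp_contDiffOn (hW.comp (graphEquiv d).contDiff.contDiffOn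
      fun q hq => closure_graphDomain_eq_image ▸ mem_image_of_mem _ hq)
  rw [← closure_ball _ hρ.ne'] at hℓ hℓt
  rw [setIntegral_graphDomain]
  simp only [← divergence_conj]
  refine (setIntegral_regionBetween_divergence isOpen_ball (convex_ball 0 ρ) isBounded_ball
    (hℓ.sub hℓt) hℓ (fun y hy => sub_lt_self _ (hpos y (mem_ball_zero_iff.1 hy)))
    (fun y hy => ?_) hV).trans ?_
  · rw [frontier_ball _ hρ.ne', mem_sphere_zero_iff_norm] at hy
    rw [hzero y hy, sub_zero]
  · simp only [omegaW_mul_inner_nuUp, omegaW_mul_inner_nuDown, ← sub_eq_add_neg, graphEquiv_apply]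

theorem isGaussBoundary_graphDomain (hρ : 0 < ρ) (hℓ : ContDiffOn ℝ 1 ℓ (closedBall 0 ρ))
    (hℓt : ContDiffOn ℝ 1 ℓt (closedBall 0 ρ)) (hpos : ∀ y, ‖y‖ < ρ → 0 < ℓt y)
    (hzero : ∀ y, ‖y‖ = ρ → ℓt y = 0) :
    IsGaussBoundary (graphDomain d ρ ℓ ℓt) (graphPatch d ℓ ℓt) (ball 0 ρ) volume := by
  have hm := hℓ.sub hℓt
  obtain ⟨hlower, hupper⟩ : MapsTo (fun y => graphMk d y (ℓ y - ℓt y)) (ball 0 ρ)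
      (closure (graphDomain d ρ ℓ ℓt)) ∧ MapsTo (fun y => graphMk d y (ℓ y)) (ball 0 ρ)
      (closure (graphDomain d ρ ℓ ℓt)) := by
    rw [← closure_ball _ hρ.ne'] at hm hℓ
    rw [closure_graphDomain_eq_image]
    exact (mapsTo_graph_closure_regionBetween
      (fun y hy => sub_lt_self _ (hpos y (mem_ball_zero_iff.1 hy))) hm hℓ).imp
      ((mapsTo_image (graphEquiv d) _).comp ·) ((mapsTo_image (graphEquiv d) _).comp ·)
  constructor <;> simp only [Fin.forall_fin_two, Fin.sum_univ_two]
  case mapsTo_param => exact ⟨hupper, hlower⟩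
  case continuousOn_param =>
    exact ⟨continuousOn_graphMk continuousOn_id (hℓ.continuousOn.mono ball_subset_closedBall),
      continuousOn_graphMk continuousOn_id (hm.continuousOn.mono ball_subset_closedBall)⟩
  case continuousOn_normal => exact ⟨continuousOn_nuUp hℓ, continuousOn_nuDown hm⟩
  case norm_normal => exact ⟨fun y _ => norm_nuUp _ y, fun y _ => norm_nuDown _ y⟩
  case bddContOn_area => exact ⟨bddContOn_omegaW hℓ, bddContOn_omegaW hm⟩
  case area_nonneg => exact ⟨fun y _ => (omegaW_pos _ y).le, fun y _ => (omegaW_pos _ y).le⟩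
  case setIntegral_divergence =>
    exact fun W hW => setIntegral_graphDomain_divergence hρ hℓ hℓt hpos hzero hW

end GraphPatch

section Energy

lemma setIntegral_setIntegral_eq_setIntegral_prod {X Y : Type*} [MeasurableSpace X]
    [MeasurableSpace Y] {μ : Measure X} {ν : Measure Y} [SFinite μ] [SFinite ν] {S : Set X}
    {R : Set Y} {f : X × Y → ℝ} (hf : IntegrableOn f (S ×ˢ R) (μ.prod ν)) :
    ∫ y in R, (∫ x in S, f (x, y) ∂μ) ∂ν = ∫ q in S ×ˢ R, f q ∂(μ.prod ν) := by
  rw [IntegrableOn, ← Measure.prod_restrict] at hf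
  rw [← Measure.prod_restrict, integral_prod_symm f hf]

variable {E : Type*} [NormedAddCommGroup E] [InnerProductSpace ℝ E] [FiniteDimensional ℝ E]
  {D : Set E} {H : E → E} {G : E × ℝ → ℝ} {a b : ℝ}

lemma bddContOn_transport (hD : IsOpen D) (hbdd : Bornology.IsBounded D)
    (hG : ContDiffOn ℝ 1 G (closure D ×ˢ Icc a b)) (hH : ContDiffOn ℝ 1 H (closure D)) (r : ℝ) :
    BddContOn (fun q => fderiv ℝ G q (H q.1, r)) (D ×ˢ Ioo a b) := by
  have hH' : BddContOn (fun q : E × ℝ => H q.1) (D ×ˢ Ioo a b) :=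
    (BddContOn.of_isCompact hbdd.isCompact_closure hH.continuousOn subset_closure).comp
      continuousOn_fst mapsTo_fst_prod
  exact ((bddContOn_fderiv (hbdd.isCompact_closure.prod isCompact_Icc) (hD.prod isOpen_Ioo)
    (prod_mono subset_closure Ioo_subset_Icc_self) hG).prodMk hH').continuous_comp
    (φ := fun z => z.1 (z.2, r)) (by fun_prop)

lemma bddContOn_mul_divergence (hD : IsOpen D) (hbdd : Bornology.IsBounded D)
    (hG : ContinuousOn G (closure D ×ˢ Icc a b)) (hH : ContDiffOn ℝ 1 H (closure D)) :
    BddContOn (fun q => G q * divergence H q.1) (D ×ˢ Ioo a b) :=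
  ((BddContOn.of_isCompact (hbdd.isCompact_closure.prod isCompact_Icc) hG
    (prod_mono subset_closure Ioo_subset_Icc_self)).prodMk
    ((bddContOn_divergence hbdd.isCompact_closure hD subset_closure hH).comp continuousOn_fst
      mapsTo_fst_prod)).continuous_comp (φ := fun z => z.1 * z.2) (by fun_prop)

variable [MeasureSpace E] [BorelSpace E]

variable {ι X : Type*} [Fintype ι] [TopologicalSpace X] [MeasurableSpace X]
  {S : ι → BoundaryPatch X E} {B : Set X} {ν : Measure X}

lemma setIntegral_slice_divergence (hS : IsGaussBoundary D S B ν) (hD : IsOpen D)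
    (hG : ContDiffOn ℝ 1 G (closure D ×ˢ Icc a b)) (hH : ContDiffOn ℝ 1 H (closure D)) {t : ℝ}
    (ht : t ∈ Ioo a b) :
    ∫ x in D, (fderiv ℝ G (x, t) (H x, 0) + G (x, t) * divergence H x) =
      ∫ y in B, ∑ i, (S i).area y *
        (G ((S i).param y, t) * ⟪H ((S i).param y), (S i).normal y⟫) ∂ν := by
  have hGt : ContDiffOn ℝ 1 (fun x => G (x, t)) (closure D) :=
    hG.comp (by fun_prop) fun x hx => ⟨hx, Ioo_subset_Icc_self ht⟩
  have hdiv : ∀ x ∈ D, fderiv ℝ G (x, t) (H x, 0) + G (x, t) * divergence H x =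
      divergence (fun y => G (y, t) • H y) x := by
    intro x hx
    rw [divergence_smul (differentiableAt_of_contDiffOn hGt hD subset_closure hx)
      (differentiableAt_of_contDiffOn hH hD subset_closure hx), add_comm,
      fderiv_comp_prodMk_left_apply (differentiableAt_of_contDiffOn hG (hD.prod isOpen_Ioo)
        (prod_mono subset_closure Ioo_subset_Icc_self) ⟨hx, ht⟩)]
  rw [setIntegral_congr_fun hD.measurableSet hdiv,
    hS.setIntegral_divergence (fun y => G (y, t) • H y) (hGt.smul hH)]
  simp only [real_inner_smul_left]

variable [IsLocallyFiniteMeasure (volume : Measure E)]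

lemma setIntegral_cylinder_fderiv_snd (hD : IsOpen D) (hbdd : Bornology.IsBounded D)
    (hab : a ≤ b) (hG : ContDiffOn ℝ 1 G (closure D ×ˢ Icc a b)) :
    ∫ q in D ×ˢ Ioo a b, fderiv ℝ G q (0, 1) = ∫ x in D, (G (x, b) - G (x, a)) := by
  refine setIntegral_prod_Ioo_eq_sub_of_hasDerivAt hD.measurableSet hab
    (fun x hx => hG.continuousOn.comp (by fun_prop) fun t ht => ⟨subset_closure hx, ht⟩)
    (fun x hx t ht => hasDerivAt_comp_prodMk_right (differentiableAt_of_contDiffOn hG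
      (hD.prod isOpen_Ioo) (prod_mono subset_closure Ioo_subset_Icc_self) ⟨hx, ht⟩))
    ((bddContOn_transport hD hbdd hG contDiffOn_const 1).integrableOn
      (hD.prod isOpen_Ioo).measurableSet (hbdd.prod (isBounded_Ioo a b)).measure_lt_top.ne)

theorem setIntegral_transport_eq (hS : IsGaussBoundary D S B ν) (hD : IsOpen D)
    (hbdd : Bornology.IsBounded D) (hab : a ≤ b) (hG : ContDiffOn ℝ 1 G (closure D ×ˢ Icc a b))
    (hH : ContDiffOn ℝ 1 H (closure D)) :
    ∫ q in D ×ˢ Ioo a b, (fderiv ℝ G q (H q.1, 1) + G q * divergence H q.1) =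
      (∫ x in D, G (x, b)) - (∫ x in D, G (x, a)) +
        ∫ t in Ioo a b, (∫ y in B, ∑ i, (S i).area y *
          (G ((S i).param y, t) * ⟪H ((S i).param y), (S i).normal y⟫) ∂ν) := by
  have hvol : volume (D ×ˢ Ioo a b) ≠ ⊤ := (hbdd.prod (isBounded_Ioo a b)).measure_lt_top.ne
  have hmeas : MeasurableSet (D ×ˢ Ioo a b) := (hD.prod isOpen_Ioo).measurableSet
  have hslice : ∀ t ∈ Icc a b, IntegrableOn (fun x => G (x, t)) D := fun t ht =>
    (BddContOn.of_isCompact hbdd.isCompact_closure (hG.continuousOn.comp (by fun_prop)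
      fun x hx => ⟨hx, ht⟩) subset_closure).integrableOn hD.measurableSet hbdd.measure_lt_top.ne
  have htime : IntegrableOn (fun q => fderiv ℝ G q (0, 1)) (D ×ˢ Ioo a b) :=
    (bddContOn_transport hD hbdd hG contDiffOn_const 1).integrableOn hmeas hvol
  have hspace : IntegrableOn (fun q => fderiv ℝ G q (H q.1, 0) + G q * divergence H q.1)
      (D ×ˢ Ioo a b) :=
    ((bddContOn_transport hD hbdd hG hH 0).integrableOn hmeas hvol).add
      ((bddContOn_mul_divergence hD hbdd hG.continuousOn hH).integrableOn hmeas hvol)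
  simp only [fderiv_apply_prodMk_one G _ (H _), add_assoc]
  rw [integral_add htime hspace, setIntegral_cylinder_fderiv_snd hD hbdd hab hG,
    integral_sub (hslice b (right_mem_Icc.2 hab)) (hslice a (left_mem_Icc.2 hab)),
    Measure.volume_eq_prod, ← setIntegral_setIntegral_eq_setIntegral_prod hspace,
    setIntegral_congr_fun measurableSet_Ioo fun t ht =>
      setIntegral_slice_divergence hS hD hG hH ht]

end Energy

section Carleman

variable {n : ℕ} {β s κ M : ℝ} {H : Esp n → Esp n} {p : Esp n → ℝ} {u : Esp n → ℝ → ℝ}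
  {x : Esp n} {t : ℝ}

/-- The Carleman density `w² e^{2sφ_H}` on space-time. -/
def carlemanDensity (β s : ℝ) (H : Esp n → Esp n) (w : Esp n → ℝ → ℝ) (q : Esp n × ℝ) : ℝ :=
  w q.1 q.2 ^ 2 * Real.exp (2 * s * phiW β H q.1 q.2)

/-- The transport operator `∂ₜu + H · ∇u + pu`. -/
def transportOp (H : Esp n → Esp n) (p : Esp n → ℝ) (u : Esp n → ℝ → ℝ) (x : Esp n) (t : ℝ) : ℝ :=
  deriv (u x) t + ⟪H x, gradient (fun z => u z t) x⟫ + p x * u x t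

lemma carlemanDensity_nonneg (β s : ℝ) (H : Esp n → Esp n) (w : Esp n → ℝ → ℝ) (q : Esp n × ℝ) :
    0 ≤ carlemanDensity β s H w q := by
  unfold carlemanDensity
  positivity

lemma transportOp_eq_fderiv_apply
    (hu : DifferentiableAt ℝ (fun q : Esp n × ℝ => u q.1 q.2) (x, t)) :
    transportOp H p u x t =
      fderiv ℝ (fun q : Esp n × ℝ => u q.1 q.2) (x, t) (H x, 1) + p x * u x t := by
  rw [transportOp, fderiv_apply_prodMk_one, ← fderiv_comp_prodMk_left_apply hu,
    real_inner_comm, inner_gradient_left]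
  exact congrArg (· + _ + _) (hasDerivAt_comp_prodMk_right hu).deriv

lemma fderiv_carlemanDensity_apply
    (hu : DifferentiableAt ℝ (fun q : Esp n × ℝ => u q.1 q.2) (x, t))
    (hψ : DifferentiableAt ℝ (psiW H) x) :
    fderiv ℝ (carlemanDensity β s H u) (x, t) (H x, 1) =
      (2 * u x t * (transportOp H p u x t - p x * u x t) +
        2 * s * (-β + ⟪H x, gradient (psiW H) x⟫) * u x t ^ 2) *
        Real.exp (2 * s * phiW β H x t) := by
  have hφ : HasFDerivAt (fun q : Esp n × ℝ => phiW β H q.1 q.2)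
      (-(β • ContinuousLinearMap.snd ℝ (Esp n) ℝ) +
        (fderiv ℝ (psiW H) x).comp (ContinuousLinearMap.fst ℝ (Esp n) ℝ)) (x, t) :=
    ((hasFDerivAt_snd (p := (x, t))).const_mul β).neg.add
      (HasFDerivAt.comp (x, t) (g := psiW H) hψ.hasFDerivAt hasFDerivAt_fst)
  have hdensity : HasFDerivAt (carlemanDensity β s H u) _ (x, t) :=
    (hu.hasFDerivAt.pow 2).mul (hφ.const_mul (2 * s)).exp
  rw [hdensity.fderiv, transportOp_eq_fderiv_apply hu, real_inner_comm, inner_gradient_left]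
  simp only [smul_add, smul_neg, Nat.add_one_sub_one, pow_one, nsmul_eq_mul, Nat.cast_ofNat,
    _root_.add_apply, _root_.neg_apply, _root_.smul_apply, ContinuousLinearMap.coe_snd',
    smul_eq_mul, mul_one, ContinuousLinearMap.comp_apply, ContinuousLinearMap.coe_fst',
    add_sub_cancel_right]
  ring

lemma half_mul_sq_sub_inv_mul_sq_le {k r v F : ℝ} (hk : 0 < k) (hr : 3 / 2 * k ≤ r) :
    k / 2 * v ^ 2 - k⁻¹ * F ^ 2 ≤ 2 * v * F + r * v ^ 2 := by
  have hyoung : 0 ≤ k⁻¹ * (k * v + F) ^ 2 := by positivity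
  have hexpand : k⁻¹ * (k * v + F) ^ 2 = k * v ^ 2 + 2 * v * F + k⁻¹ * F ^ 2 := by
    field_simp
    ring
  linarith [mul_le_mul_of_nonneg_right hr (sq_nonneg v)]

lemma carlemanDensity_sub_le (hu : DifferentiableAt ℝ (fun q : Esp n × ℝ => u q.1 q.2) (x, t))
    (hψ : DifferentiableAt ℝ (psiW H) x) (hs : 0 < s) (hκ : 0 < κ)
    (hκψ : κ ≤ -β + ⟪H x, gradient (psiW H) x⟫) (hp : |p x| ≤ M) (hH : ‖fderiv ℝ H x‖ ≤ M)
    (hsκ : 2 * ((n + 2) * M) ≤ s * κ) :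
    s * κ / 2 * carlemanDensity β s H u (x, t) -
        (s * κ)⁻¹ * carlemanDensity β s H (transportOp H p u) (x, t) ≤
      fderiv ℝ (carlemanDensity β s H u) (x, t) (H x, 1) +
        carlemanDensity β s H u (x, t) * divergence H x := by
  have hdiv : |divergence H x| ≤ n * M := by
    refine (abs_divergence_le H x).trans ?_
    rw [finrank_euclideanSpace_fin]
    gcongr
  have hcoeff : 3 / 2 * (s * κ) ≤
      2 * s * (-β + ⟪H x, gradient (psiW H) x⟫) - 2 * p x + divergence H x := by
    have hweight := mul_le_mul_of_nonneg_left hκψ hs.le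
    linarith [le_of_abs_le hp, neg_le_of_abs_le hdiv]
  have hpointwise := mul_le_mul_of_nonneg_right
    (half_mul_sq_sub_inv_mul_sq_le (v := u x t) (F := transportOp H p u x t) (mul_pos hs hκ) hcoeff)
    (Real.exp_pos (2 * s * phiW β H x t)).le
  rw [fderiv_carlemanDensity_apply (p := p) hu hψ]
  simp only [carlemanDensity]
  linarith

lemma contDiffOn_psiW {D : Set (Esp n)} (hH : ContDiffOn ℝ 1 H D) : ContDiffOn ℝ 1 (psiW H) D :=
  contDiffOn_id.inner ℝ hH

lemma contDiffOn_exp_phiW {D : Set (Esp n)} {J : Set ℝ} (hH : ContDiffOn ℝ 1 H D) :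
    ContDiffOn ℝ 1 (fun q : Esp n × ℝ => Real.exp (2 * s * phiW β H q.1 q.2)) (D ×ˢ J) := by
  have hψ : ContDiffOn ℝ 1 (fun q : Esp n × ℝ => psiW H q.1) (D ×ˢ J) :=
    (contDiffOn_psiW hH).comp contDiffOn_fst mapsTo_fst_prod
  have htime : ContDiffOn ℝ 1 (fun q : Esp n × ℝ => -(β * q.2)) (D ×ˢ J) := by fun_prop
  exact (contDiffOn_const.mul (htime.add hψ)).exp

lemma contDiffOn_carlemanDensity {D : Set (Esp n)} {J : Set ℝ} (hH : ContDiffOn ℝ 1 H D)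
    (hu : ContDiffOn ℝ 1 (fun q : Esp n × ℝ => u q.1 q.2) (D ×ˢ J)) :
    ContDiffOn ℝ 1 (carlemanDensity β s H u) (D ×ˢ J) :=
  (hu.pow 2).mul (contDiffOn_exp_phiW hH)

variable {D : Set (Esp n)} {a b : ℝ}

lemma integrableOn_carlemanDensity (hD : IsOpen D) (hbdd : Bornology.IsBounded D)
    (hH : ContDiffOn ℝ 1 H (closure D))
    (hu : ContDiffOn ℝ 1 (fun q : Esp n × ℝ => u q.1 q.2) (closure D ×ˢ Icc a b)) :
    IntegrableOn (carlemanDensity β s H u) (D ×ˢ Ioo a b) :=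
  (BddContOn.of_isCompact (hbdd.isCompact_closure.prod isCompact_Icc)
    (contDiffOn_carlemanDensity hH hu).continuousOn
    (prod_mono subset_closure Ioo_subset_Icc_self)).integrableOn
    (hD.prod isOpen_Ioo).measurableSet (hbdd.prod (isBounded_Ioo a b)).measure_lt_top.ne

lemma integrableOn_carlemanDensity_transportOp (hD : IsOpen D) (hbdd : Bornology.IsBounded D)
    (hH : ContDiffOn ℝ 1 H (closure D)) (hp : AEStronglyMeasurable p (volume.restrict D))
    (hpM : ∀ x ∈ D, |p x| ≤ M)
    (hu : ContDiffOn ℝ 1 (fun q : Esp n × ℝ => u q.1 q.2) (closure D ×ˢ Icc a b)) :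
    IntegrableOn (carlemanDensity β s H (transportOp H p u)) (D ×ˢ Ioo a b) := by
  have hmeas : MeasurableSet (D ×ˢ Ioo a b) := (hD.prod isOpen_Ioo).measurableSet
  have hsub : D ×ˢ Ioo a b ⊆ closure D ×ˢ Icc a b :=
    prod_mono subset_closure Ioo_subset_Icc_self
  have hK : IsCompact (closure D ×ˢ Icc a b) := hbdd.isCompact_closure.prod isCompact_Icc
  have hp' : AEStronglyMeasurable (fun q : Esp n × ℝ => p q.1)
      (volume.restrict (D ×ˢ Ioo a b)) := by
    rw [Measure.volume_eq_prod, ← Measure.prod_restrict]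
    exact hp.comp_fst
  have hint : IntegrableOn (fun q => (fderiv ℝ (fun q : Esp n × ℝ => u q.1 q.2) q (H q.1, 1) +
      p q.1 * u q.1 q.2) ^ 2 * Real.exp (2 * s * phiW β H q.1 q.2)) (D ×ˢ Ioo a b) :=
    (((bddContOn_transport hD hbdd hu hH 1).prodMk (.of_isCompact hK hu.continuousOn hsub)).prodMk
      (.of_isCompact hK (contDiffOn_exp_phiW hH).continuousOn hsub)).integrableOn_continuous_comp
      (φ := fun z => (z.1.1.1 + z.2 * z.1.1.2) ^ 2 * z.1.2) hp' (fun q hq => hpM _ hq.1)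
      (by fun_prop) hmeas (hbdd.prod (isBounded_Ioo a b)).measure_lt_top.ne
  refine hint.congr_fun (fun q hq => ?_) hmeas
  simp only [carlemanDensity]
  rw [transportOp_eq_fderiv_apply
    (differentiableAt_of_contDiffOn hu (hD.prod isOpen_Ioo) hsub hq)]

theorem setIntegral_carlemanDensity_sub_le (hD : IsOpen D) (hbdd : Bornology.IsBounded D)
    (hs : 0 < s) (hκ : 0 < κ) (hsκ : 2 * ((n + 2) * M) ≤ s * κ)
    (hH : ContDiffOn ℝ 1 H (closure D)) (hDH : ∀ x ∈ D, ‖fderiv ℝ H x‖ ≤ M)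
    (hκψ : ∀ x ∈ D, κ ≤ -β + ⟪H x, gradient (psiW H) x⟫)
    (hp : AEStronglyMeasurable p (volume.restrict D)) (hpM : ∀ x ∈ D, |p x| ≤ M)
    (hu : ContDiffOn ℝ 1 (fun q : Esp n × ℝ => u q.1 q.2) (closure D ×ˢ Icc a b)) :
    s * κ / 2 * (∫ q in D ×ˢ Ioo a b, carlemanDensity β s H u q) -
        (s * κ)⁻¹ * (∫ q in D ×ˢ Ioo a b, carlemanDensity β s H (transportOp H p u) q) ≤
      ∫ q in D ×ˢ Ioo a b, (fderiv ℝ (carlemanDensity β s H u) q (H q.1, 1) +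
        carlemanDensity β s H u q * divergence H q.1) := by
  have hcyl : IsOpen (D ×ˢ Ioo a b) := hD.prod isOpen_Ioo
  have hvol : volume (D ×ˢ Ioo a b) ≠ ⊤ := (hbdd.prod (isBounded_Ioo a b)).measure_lt_top.ne
  have hdensity := contDiffOn_carlemanDensity (β := β) (s := s) hH hu
  have hleft := (integrableOn_carlemanDensity (β := β) (s := s) hD hbdd hH hu).const_mul (s * κ / 2)
  have hleft' := (integrableOn_carlemanDensity_transportOp (β := β) (s := s) hD hbdd hH hp hpM
    hu).const_mul (s * κ)⁻¹
  have hright := ((bddContOn_transport hD hbdd hdensity hH 1).integrableOn hcyl.measurableSet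
    hvol).add ((bddContOn_mul_divergence hD hbdd hdensity.continuousOn hH).integrableOn
      hcyl.measurableSet hvol)
  rw [← integral_const_mul, ← integral_const_mul, ← integral_sub hleft hleft']
  refine setIntegral_mono_on (hleft.sub hleft') hright hcyl.measurableSet fun q hq => ?_
  exact carlemanDensity_sub_le
    (differentiableAt_of_contDiffOn hu hcyl (prod_mono subset_closure Ioo_subset_Icc_self) hq)
    (differentiableAt_of_contDiffOn (contDiffOn_psiW hH) hD subset_closure hq.1) hs hκ
    (hκψ _ hq.1) (hpM _ hq.1) (hDH _ hq.1) hsκ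

end Carleman

section BoundaryFlux

lemma BddContOn.integrableOn_indicator {X : Type*} [TopologicalSpace X] [MeasurableSpace X]
    [OpensMeasurableSpace X] {μ : Measure X} {S : Set X} {f h : X → ℝ} {F : Set ℝ}
    (hf : BddContOn f S) (hh : ContinuousOn h S) (hF : IsClosed F) (hS : MeasurableSet S)
    (hμ : μ S ≠ ⊤) : IntegrableOn ((h ⁻¹' F).indicator f) S μ :=
  (hf.integrableOn hS hμ).indicator₀
    ((hh.aemeasurable hS).nullMeasurableSet_preimage hF.measurableSet)

lemma measure_prod_Ioo_ne_top {X : Type*} [MeasurableSpace X] {ν : Measure X} {B : Set X} {a b : ℝ}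
    (hνB : ν B ≠ ⊤) : (ν.prod volume) (B ×ˢ Ioo a b) ≠ ⊤ := by
  rw [Measure.prod_prod]
  exact ENNReal.mul_ne_top hνB measure_Ioo_lt_top.ne

variable {ι X E : Type*} [NormedAddCommGroup E] [InnerProductSpace ℝ E]

namespace BoundaryPatch

/-- The trace density `|v|² ω` on the part of the patch where `H` points outwards. -/
def outflow (P : BoundaryPatch X E) (H : E → E) (v : E → ℝ) : X → ℝ :=
  {y | 0 ≤ ⟪H (P.param y), P.normal y⟫}.indicator fun y => v (P.param y) ^ 2 * P.area y

/-- The trace density `|H · ν| |v|² ω` on the part of the patch where `H` points inwards. -/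
def inflow (P : BoundaryPatch X E) (H : E → E) (v : E → ℝ) : X → ℝ :=
  {y | ⟪H (P.param y), P.normal y⟫ ≤ 0}.indicator fun y =>
    |⟪H (P.param y), P.normal y⟫| * v (P.param y) ^ 2 * P.area y

variable {P : BoundaryPatch X E} {H : E → E} {v : E → ℝ} {y : X}

lemma outflow_nonneg (hP : 0 ≤ P.area y) : 0 ≤ P.outflow H v y :=
  indicator_apply_nonneg fun _ => by positivity

lemma inflow_nonneg (hP : 0 ≤ P.area y) : 0 ≤ P.inflow H v y :=
  indicator_apply_nonneg fun _ => by positivity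

lemma area_mul_flux_le {e m k M : ℝ} (hP : 0 ≤ P.area y) (hν : ‖P.normal y‖ = 1)
    (hH : ‖H (P.param y)‖ ≤ M) (hm : 0 ≤ m) (hme : m ≤ e) (hek : e ≤ k) :
    P.area y * (v (P.param y) ^ 2 * e * ⟪H (P.param y), P.normal y⟫) ≤
      M * k * P.outflow H v y - m * P.inflow H v y := by
  have hflux : ⟪H (P.param y), P.normal y⟫ ≤ M := by
    simpa [hν] using (real_inner_le_norm (H (P.param y)) (P.normal y)).trans
      (mul_le_mul_of_nonneg_right hH (norm_nonneg _))
  have hM : 0 ≤ M := (norm_nonneg _).trans hH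
  have htrace : 0 ≤ v (P.param y) ^ 2 * P.area y := by positivity
  classical
  simp only [outflow, inflow, indicator_apply, mem_ofPred_eq]
  rcases lt_trichotomy ⟪H (P.param y), P.normal y⟫ 0 with hneg | hzero | hpos
  · rw [if_neg hneg.not_ge, if_pos hneg.le, abs_of_neg hneg]
    linarith [mul_le_mul_of_nonneg_right (mul_le_mul_of_nonpos_right hme hneg.le) htrace]
  · rw [if_pos hzero.ge, if_pos hzero.le, hzero, abs_zero]
    linarith [mul_nonneg (mul_nonneg hM (hm.trans (hme.trans hek))) htrace]
  · rw [if_pos hpos.le, if_neg hpos.not_ge]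
    linarith [mul_le_mul_of_nonneg_right (mul_le_mul hflux hek (hm.trans hme) hM) htrace]

end BoundaryPatch

variable [Fintype ι] [TopologicalSpace X] [MeasurableSpace X] [MeasureSpace E]
  {D : Set E} {S : ι → BoundaryPatch X E} {B : Set X} {ν : Measure X} {H : E → E} {u : E → ℝ → ℝ}
  {a b : ℝ} {i : ι}

/-- The boundary integral of `|u|²` over the outflow part of the lateral boundary. -/
def outflowIntegral (S : ι → BoundaryPatch X E) (B : Set X) (ν : Measure X) (H : E → E)
    (u : E → ℝ → ℝ) (a b : ℝ) : ℝ :=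
  ∫ t in Ioo a b, (∫ y in B, ∑ i, (S i).outflow H (fun x => u x t) y ∂ν)

/-- The boundary integral of `|H · ν| |u|²` over the inflow part of the lateral boundary. -/
def inflowIntegral (S : ι → BoundaryPatch X E) (B : Set X) (ν : Measure X) (H : E → E)
    (u : E → ℝ → ℝ) (a b : ℝ) : ℝ :=
  ∫ t in Ioo a b, (∫ y in B, ∑ i, (S i).inflow H (fun x => u x t) y ∂ν)

namespace IsGaussBoundary

lemma outflowIntegral_nonneg (hS : IsGaussBoundary D S B ν) (hB : MeasurableSet B) :
    0 ≤ outflowIntegral S B ν H u a b :=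
  integral_nonneg fun _ => setIntegral_nonneg hB fun y hy =>
    Finset.sum_nonneg fun i _ => BoundaryPatch.outflow_nonneg (hS.area_nonneg i y hy)

lemma inflowIntegral_nonneg (hS : IsGaussBoundary D S B ν) (hB : MeasurableSet B) :
    0 ≤ inflowIntegral S B ν H u a b :=
  integral_nonneg fun _ => setIntegral_nonneg hB fun y hy =>
    Finset.sum_nonneg fun i _ => BoundaryPatch.inflow_nonneg (hS.area_nonneg i y hy)

variable [FiniteDimensional ℝ E]

lemma bddContOn_flux (hS : IsGaussBoundary D S B ν) (hbdd : Bornology.IsBounded D)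
    (hH : ContinuousOn H (closure D)) :
    BddContOn (fun y => ⟪H ((S i).param y), (S i).normal y⟫) B := by
  have hnormal : BddContOn (S i).normal B :=
    ⟨hS.continuousOn_normal i, sphere 0 1, isCompact_sphere 0 1,
      fun y hy => mem_sphere_zero_iff_norm.2 (hS.norm_normal i y hy)⟩
  exact ((BddContOn.of_isCompact hbdd.isCompact_closure hH subset_rfl).comp
    (hS.continuousOn_param i) (hS.mapsTo_param i)).prodMk hnormal |>.continuous_comp
      (φ := fun z => ⟪z.1, z.2⟫) (by fun_prop)

lemma bddContOn_trace (hS : IsGaussBoundary D S B ν) (hbdd : Bornology.IsBounded D) {G : E × ℝ → ℝ}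
    (hG : ContinuousOn G (closure D ×ˢ Icc a b)) :
    BddContOn (fun q : X × ℝ => G ((S i).param q.1, q.2)) (B ×ˢ Ioo a b) :=
  (BddContOn.of_isCompact (hbdd.isCompact_closure.prod isCompact_Icc) hG subset_rfl).comp
    (((hS.continuousOn_param i).comp continuousOn_fst mapsTo_fst_prod).prodMk continuousOn_snd)
    fun _ hq => ⟨hS.mapsTo_param i hq.1, Ioo_subset_Icc_self hq.2⟩

lemma bddContOn_flux_area_trace (hS : IsGaussBoundary D S B ν) (hbdd : Bornology.IsBounded D)
    (hH : ContinuousOn H (closure D)) {G : E × ℝ → ℝ}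
    (hG : ContinuousOn G (closure D ×ˢ Icc a b)) :
    BddContOn (fun q : X × ℝ => ((⟪H ((S i).param q.1), (S i).normal q.1⟫, (S i).area q.1),
      G ((S i).param q.1, q.2))) (B ×ˢ Ioo a b) :=
  (((hS.bddContOn_flux hbdd hH).prodMk (hS.bddContOn_area i)).comp continuousOn_fst
    mapsTo_fst_prod).prodMk (hS.bddContOn_trace hbdd hG)

variable [OpensMeasurableSpace X]

lemma integrableOn_flux (hS : IsGaussBoundary D S B ν) (hbdd : Bornology.IsBounded D)
    (hB : MeasurableSet B) (hνB : ν B ≠ ⊤) (hH : ContinuousOn H (closure D)) {G : E × ℝ → ℝ}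
    (hG : ContinuousOn G (closure D ×ˢ Icc a b)) :
    IntegrableOn (fun q : X × ℝ => ∑ i, (S i).area q.1 *
      (G ((S i).param q.1, q.2) * ⟪H ((S i).param q.1), (S i).normal q.1⟫))
      (B ×ˢ Ioo a b) (ν.prod volume) :=
  integrable_finsetSum _ fun i _ => ((hS.bddContOn_flux_area_trace hbdd hH hG).continuous_comp
    (φ := fun z : (ℝ × ℝ) × ℝ => z.1.2 * (z.2 * z.1.1)) (by fun_prop)).integrableOn
    (hB.prod measurableSet_Ioo) (measure_prod_Ioo_ne_top hνB)

lemma integrableOn_outflow (hS : IsGaussBoundary D S B ν) (hbdd : Bornology.IsBounded D)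
    (hB : MeasurableSet B) (hνB : ν B ≠ ⊤) (hH : ContinuousOn H (closure D))
    (hu : ContinuousOn (fun q : E × ℝ => u q.1 q.2) (closure D ×ˢ Icc a b)) :
    IntegrableOn (fun q : X × ℝ => ∑ i, (S i).outflow H (fun x => u x q.2) q.1)
      (B ×ˢ Ioo a b) (ν.prod volume) :=
  integrable_finsetSum _ fun i _ => ((hS.bddContOn_flux_area_trace hbdd hH hu).continuous_comp
    (φ := fun z : (ℝ × ℝ) × ℝ => z.2 ^ 2 * z.1.2) (by fun_prop)).integrableOn_indicator
    ((hS.bddContOn_flux hbdd hH).continuousOn.comp continuousOn_fst mapsTo_fst_prod) isClosed_Ici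
    (hB.prod measurableSet_Ioo) (measure_prod_Ioo_ne_top hνB)

lemma integrableOn_inflow (hS : IsGaussBoundary D S B ν) (hbdd : Bornology.IsBounded D)
    (hB : MeasurableSet B) (hνB : ν B ≠ ⊤) (hH : ContinuousOn H (closure D))
    (hu : ContinuousOn (fun q : E × ℝ => u q.1 q.2) (closure D ×ˢ Icc a b)) :
    IntegrableOn (fun q : X × ℝ => ∑ i, (S i).inflow H (fun x => u x q.2) q.1)
      (B ×ˢ Ioo a b) (ν.prod volume) :=
  integrable_finsetSum _ fun i _ => ((hS.bddContOn_flux_area_trace hbdd hH hu).continuous_comp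
    (φ := fun z : (ℝ × ℝ) × ℝ => |z.1.1| * z.2 ^ 2 * z.1.2) (by fun_prop)).integrableOn_indicator
    ((hS.bddContOn_flux hbdd hH).continuousOn.comp continuousOn_fst mapsTo_fst_prod) isClosed_Iic
    (hB.prod measurableSet_Ioo) (measure_prod_Ioo_ne_top hνB)

theorem setIntegral_flux_le [SFinite ν] (hS : IsGaussBoundary D S B ν)
    (hbdd : Bornology.IsBounded D) (hB : MeasurableSet B) (hνB : ν B ≠ ⊤)
    {e : E × ℝ → ℝ} {m k M : ℝ} (hH : ContinuousOn H (closure D)) (hHM : ∀ x ∈ closure D, ‖H x‖ ≤ M)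
    (hu : ContinuousOn (fun q : E × ℝ => u q.1 q.2) (closure D ×ˢ Icc a b))
    (he : ContinuousOn e (closure D ×ˢ Icc a b)) (hm : 0 ≤ m)
    (hmek : ∀ q ∈ closure D ×ˢ Icc a b, m ≤ e q ∧ e q ≤ k) :
    ∫ t in Ioo a b, (∫ y in B, ∑ i, (S i).area y * (u ((S i).param y) t ^ 2 *
        e ((S i).param y, t) * ⟪H ((S i).param y), (S i).normal y⟫) ∂ν) ≤
      M * k * outflowIntegral S B ν H u a b - m * inflowIntegral S B ν H u a b := by
  have hflux := hS.integrableOn_flux hbdd hB hνB hH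
    (G := fun q => u q.1 q.2 ^ 2 * e q) ((hu.pow 2).mul he)
  have hout := hS.integrableOn_outflow hbdd hB hνB hH hu
  have hin := hS.integrableOn_inflow hbdd hB hνB hH hu
  rw [outflowIntegral, inflowIntegral, setIntegral_setIntegral_eq_setIntegral_prod hflux,
    setIntegral_setIntegral_eq_setIntegral_prod hout,
    setIntegral_setIntegral_eq_setIntegral_prod hin, ← integral_const_mul, ← integral_const_mul,
    ← integral_sub (hout.const_mul _) (hin.const_mul _)]
  refine setIntegral_mono_on hflux ((hout.const_mul _).sub (hin.const_mul _))
    (hB.prod measurableSet_Ioo) fun q hq => ?_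
  rw [Finset.mul_sum, Finset.mul_sum, ← Finset.sum_sub_distrib]
  refine Finset.sum_le_sum fun i _ => ?_
  have hparam := hS.mapsTo_param i hq.1
  have hweight := hmek ((S i).param q.1, q.2) ⟨hparam, Ioo_subset_Icc_self hq.2⟩
  exact BoundaryPatch.area_mul_flux_le (v := fun x => u x q.2) (hS.area_nonneg i _ hq.1)
    (hS.norm_normal i _ hq.1) (hHM _ hparam) hm hweight.1 hweight.2

end IsGaussBoundary

end BoundaryFlux

section Absorption

lemma const_mul_exp_neg_le {C N s : ℝ} (hC : 0 ≤ C) (hNC : 4 * N ≤ C) (hs : 2 ≤ s) :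
    C * Real.exp (-(C * s)) ≤ s * Real.exp (-(2 * s * N)) := by
  have hs0 : 0 ≤ s := by linarith
  have hhalf : C * Real.exp (-(C * s / 2)) ≤ s := by
    rw [Real.exp_neg, ← div_eq_mul_inv, div_le_iff₀ (Real.exp_pos _)]
    calc C ≤ s * (C * s / 2 + 1) := by nlinarith [mul_le_mul hs hs zero_le_two hs0]
      _ ≤ s * Real.exp (C * s / 2) := by gcongr; exact Real.add_one_le_exp _
  calc C * Real.exp (-(C * s))
      = C * Real.exp (-(C * s / 2)) * Real.exp (-(C * s / 2)) := by
        rw [mul_assoc, ← Real.exp_add]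
        ring_nf
    _ ≤ s * Real.exp (-(2 * s * N)) := by
        gcongr
        linarith [mul_le_mul_of_nonneg_right hNC hs0]

lemma mul_exp_le_exp_const_mul {C N s : ℝ} (hNC : 2 * N + 1 ≤ C) (hs : 0 ≤ s) :
    s * Real.exp (2 * s * N) ≤ Real.exp (C * s) :=
  calc s * Real.exp (2 * s * N) ≤ Real.exp s * Real.exp (2 * s * N) := by
        gcongr
        linarith [Real.add_one_le_exp s]
    _ = Real.exp ((2 * N + 1) * s) := by
        rw [← Real.exp_add]
        ring_nf
    _ ≤ Real.exp (C * s) := by gcongr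

lemma carleman_absorption {κ A M N C s X J Q F P Y : ℝ} (hκ : 0 < κ) (hA : 1 ≤ A)
    (hAκ : 2 ≤ A * κ) (hAC : A ≤ C) (hκC : A * κ⁻¹ ≤ C) (hMC : A * M ≤ C)
    (hNC : 4 * N + 1 ≤ C) (hs : 2 ≤ s) (hX : 0 ≤ X) (hJ : 0 ≤ J) (hQ : 0 ≤ Q) (hF : 0 ≤ F)
    (hP : 0 ≤ P) (hY : 0 ≤ Y)
    (h : s * κ / 2 * J - (s * κ)⁻¹ * F ≤
      Y - X + (M * Real.exp (2 * s * N) * P - Real.exp (-(2 * s * N)) * Q)) :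
    s * X + s ^ 2 * J + C * Real.exp (-(C * s)) * Q ≤
      C * F + C * Real.exp (C * s) * P + C * s * Y := by
  have hs0 : 0 < s := by linarith
  have hC : 0 ≤ C := by linarith
  have hexp_neg : C * Real.exp (-(C * s)) ≤ s * Real.exp (-(2 * s * N)) :=
    const_mul_exp_neg_le hC (by linarith) hs
  have hexp : s * Real.exp (2 * s * N) ≤ Real.exp (C * s) :=
    mul_exp_le_exp_const_mul (by linarith) hs0.le
  calc s * X + s ^ 2 * J + C * Real.exp (-(C * s)) * Q
      ≤ A * (s * X) + s ^ 2 * (A * κ / 2 * J) + A * (s * Real.exp (-(2 * s * N)) * Q) := by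
        refine add_le_add (add_le_add ?_ ?_) ?_
        · exact le_mul_of_one_le_left (by positivity) hA
        · gcongr
          exact le_mul_of_one_le_left hJ (by linarith)
        · exact (mul_le_mul_of_nonneg_right hexp_neg hQ).trans
            ((le_mul_of_one_le_left (by positivity) hA).trans_eq (by ring))
    _ ≤ A * κ⁻¹ * F + A * M * (s * Real.exp (2 * s * N)) * P + A * s * Y := by
        have hscaled := mul_le_mul_of_nonneg_left h (by positivity : 0 ≤ A * s)
        have hcancel : A * s * ((s * κ)⁻¹ * F) = A * κ⁻¹ * F := by field_simp
        linarith
    _ ≤ C * F + C * Real.exp (C * s) * P + C * s * Y := by gcongr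

end Absorption

section Estimate

variable {n : ℕ} {T M N R β μ κ s t : ℝ} {D : Set (Esp n)} {H : Esp n → Esp n} {p : Esp n → ℝ}
  {u : Esp n → ℝ → ℝ} {x : Esp n}

lemma abs_phiW_le (hx : ‖x‖ ≤ R) (hH : ‖H x‖ ≤ M) (ht : t ∈ Icc 0 T) :
    |phiW β H x t| ≤ |β| * T + R * M := by
  have htime : |-(β * t)| ≤ |β| * T := by
    rw [abs_neg, abs_mul, abs_of_nonneg ht.1]
    exact mul_le_mul_of_nonneg_left ht.2 (abs_nonneg β)
  have hspace : |psiW H x| ≤ R * M := (abs_real_inner_le_norm _ _).trans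
    (mul_le_mul hx hH (norm_nonneg _) ((norm_nonneg _).trans hx))
  exact (abs_add_le _ _).trans (add_le_add htime hspace)

lemma exp_phiW_mem_Icc (hs : 0 ≤ s) (hφ : |phiW β H x t| ≤ N) :
    Real.exp (2 * s * phiW β H x t) ∈
      Icc (Real.exp (-(2 * s * N))) (Real.exp (2 * s * N)) := by
  obtain ⟨hlower, hupper⟩ := abs_le.1 hφ
  rw [← mul_neg]
  exact ⟨by gcongr, by gcongr⟩

variable {ι X : Type*} [Fintype ι] [TopologicalSpace X] [MeasurableSpace X]
  [OpensMeasurableSpace X] {S : ι → BoundaryPatch X (Esp n)} {B : Set X} {ν : Measure X} [SFinite ν]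

theorem carleman_energy_inequality (hS : IsGaussBoundary D S B ν) (hD : IsOpen D)
    (hbdd : Bornology.IsBounded D) (hB : MeasurableSet B) (hνB : ν B ≠ ⊤) (hT : 0 ≤ T)
    (hs : 0 < s) (hκ : 0 < κ) (hsκ : 2 * ((n + 2) * M) ≤ s * κ)
    (hφ : ∀ x ∈ closure D, ∀ t ∈ Icc 0 T, |phiW β H x t| ≤ N)
    (hH : ContDiffOn ℝ 1 H (closure D)) (hHM : ∀ x ∈ closure D, ‖H x‖ ≤ M)
    (hDH : ∀ x ∈ D, ‖fderiv ℝ H x‖ ≤ M) (hκψ : ∀ x ∈ D, κ ≤ -β + ⟪H x, gradient (psiW H) x⟫)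
    (hp : AEStronglyMeasurable p (volume.restrict D)) (hpM : ∀ x ∈ D, |p x| ≤ M)
    (hu : ContDiffOn ℝ 1 (fun q : Esp n × ℝ => u q.1 q.2) (closure D ×ˢ Icc 0 T)) :
    s * κ / 2 * (∫ t in Ioo 0 T, ∫ x in D, carlemanDensity β s H u (x, t)) -
        (s * κ)⁻¹ * (∫ t in Ioo 0 T, ∫ x in D,
          carlemanDensity β s H (transportOp H p u) (x, t)) ≤
      (∫ x in D, carlemanDensity β s H u (x, T)) - (∫ x in D, carlemanDensity β s H u (x, 0)) +
        (M * Real.exp (2 * s * N) * outflowIntegral S B ν H u 0 T -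
          Real.exp (-(2 * s * N)) * inflowIntegral S B ν H u 0 T) := by
  rw [setIntegral_setIntegral_eq_setIntegral_prod (integrableOn_carlemanDensity hD hbdd hH hu),
    setIntegral_setIntegral_eq_setIntegral_prod
      (integrableOn_carlemanDensity_transportOp hD hbdd hH hp hpM hu), ← Measure.volume_eq_prod]
  refine (setIntegral_carlemanDensity_sub_le hD hbdd hs hκ hsκ hH hDH hκψ hp hpM hu).trans ?_
  rw [setIntegral_transport_eq hS hD hbdd hT (contDiffOn_carlemanDensity hH hu) hH]
  gcongr
  exact hS.setIntegral_flux_le hbdd hB hνB hH.continuousOn hHM hu.continuousOn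
    (contDiffOn_exp_phiW hH).continuousOn (Real.exp_pos _).le
    fun q hq => exp_phiW_mem_Icc hs.le (hφ _ hq.1 _ hq.2)

theorem proposition1_carleman_estimate_general (hS : IsGaussBoundary D S B ν) (hD : IsOpen D)
    (hbdd : Bornology.IsBounded D) (hB : MeasurableSet B) (hνB : ν B ≠ ⊤) (hT : 0 ≤ T)
    (hM : 0 ≤ M) (hβμ : β < μ) :
    ∃ s₀ > (0 : ℝ), ∃ C > (0 : ℝ),
      ∀ (H : Esp n → Esp n) (p : Esp n → ℝ) (u : Esp n → ℝ → ℝ) (s : ℝ),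
        ContDiffOn ℝ 1 H (closure D) → (∀ x ∈ closure D, ‖H x‖ ≤ M) →
        (∀ x ∈ D, ‖fderiv ℝ H x‖ ≤ M) → (∀ x ∈ D, μ ≤ ⟪H x, gradient (psiW H) x⟫) →
        AEStronglyMeasurable p (volume.restrict D) → (∀ x ∈ D, |p x| ≤ M) →
        ContDiffOn ℝ 1 (fun q : Esp n × ℝ => u q.1 q.2) (closure D ×ˢ Icc 0 T) →
        s₀ < s →
        s * (∫ x in D, carlemanDensity β s H u (x, 0)) +
            s ^ 2 * (∫ t in Ioo 0 T, ∫ x in D, carlemanDensity β s H u (x, t)) +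
            C * Real.exp (-(C * s)) * inflowIntegral S B ν H u 0 T ≤
          C * (∫ t in Ioo 0 T, ∫ x in D, carlemanDensity β s H (transportOp H p u) (x, t)) +
            C * Real.exp (C * s) * outflowIntegral S B ν H u 0 T +
            C * s * (∫ x in D, carlemanDensity β s H u (x, T)) := by
  obtain ⟨R, hR, hDR⟩ := hbdd.closure.exists_pos_norm_le
  have hκ : 0 < μ - β := sub_pos.2 hβμ
  set κ := μ - β
  set N := |β| * T + R * M
  set A := max 1 (2 / κ)
  have hN : 0 ≤ N := by positivity
  have hA : 0 < A := lt_max_of_lt_left one_pos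
  have hAκ : 2 ≤ A * κ := (div_le_iff₀ hκ).1 (le_max_right _ _)
  have hAκ' : 0 ≤ A * κ⁻¹ := by positivity
  have hAM : 0 ≤ A * M := by positivity
  have hthreshold : 0 ≤ 2 * ((n + 2) * M) / κ := by positivity
  refine ⟨2 + 2 * ((n + 2) * M) / κ, by positivity, A + A * κ⁻¹ + A * M + (4 * N + 1),
    by positivity, fun H p u s hH hHM hDH hμ hp hpM hu hs => ?_⟩
  refine carleman_absorption hκ (le_max_left _ _) hAκ (by linarith) (by linarith) (by linarith)
    (by linarith) (by linarith) ?_ ?_ (hS.inflowIntegral_nonneg hB) ?_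
    (hS.outflowIntegral_nonneg hB) ?_
    (carleman_energy_inequality hS hD hbdd hB hνB hT (by linarith) hκ
      ((div_le_iff₀ hκ).1 (by linarith))
      (fun x hx t ht => abs_phiW_le (hDR x hx) (hHM x hx) ht) hH hHM hDH
      (fun x hx => by linarith [hμ x hx]) hp hpM hu)
  · exact integral_nonneg fun x => carlemanDensity_nonneg β s H u _
  · exact integral_nonneg fun t => integral_nonneg fun x => carlemanDensity_nonneg β s H u _
  · exact integral_nonneg fun t => integral_nonneg fun x => carlemanDensity_nonneg β s H _ _
  · exact integral_nonneg fun x => carlemanDensity_nonneg β s H u _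

end Estimate

/-- **Proposition 1** (Carleman estimate for the transport operator). -/
theorem proposition1_carleman_estimate
    (d : ℕ) (hd : 1 ≤ d) (T M δ₀ ρ₁ : ℝ)
    (hT : 0 < T) (hM : 0 < M) (hδ₀ : 0 < δ₀) (hρ₁ : 0 < ρ₁)
    (ℓ ℓt : Esp d → ℝ)
    (hℓ : ContDiffOn ℝ 2 ℓ (closedBall 0 ρ₁))
    (hℓt : ContDiffOn ℝ 2 ℓt (closedBall 0 ρ₁))
    (hℓtpos : ∀ x' : Esp d, ‖x'‖ < ρ₁ → 0 < ℓt x')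
    (hℓt0 : ∀ x' : Esp d, ‖x'‖ = ρ₁ → ℓt x' = 0)
    (β μ : ℝ) (hβ : 0 < β) (hβμ : β < μ) :
    ∃ s₀ > (0:ℝ), ∃ C > (0:ℝ),
      ∀ (H : Esp (d+1) → Esp (d+1)) (p : Esp (d+1) → ℝ) (u : Esp (d+1) → ℝ → ℝ) (s : ℝ),
        IsAdmissible M δ₀ (closure (graphDomain d ρ₁ ℓ ℓt)) H →
        (∀ x ∈ closure (graphDomain d ρ₁ ℓ ℓt), μ ≤ ⟪H x, gradient (psiW H) x⟫) →
        Measurable p → (∀ x ∈ graphDomain d ρ₁ ℓ ℓt, |p x| ≤ M) →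
        ContDiffOn ℝ 1 (fun q : Esp (d+1) × ℝ => u q.1 q.2)
          (closure (graphDomain d ρ₁ ℓ ℓt) ×ˢ Icc 0 T) →
        s₀ < s →
        s * (∫ x in graphDomain d ρ₁ ℓ ℓt, (u x 0) ^ 2 * Real.exp (2 * s * phiW β H x 0))
          + s ^ 2 * (∫ t in Ioo 0 T, ∫ x in graphDomain d ρ₁ ℓ ℓt,
              (u x t) ^ 2 * Real.exp (2 * s * phiW β H x t))
          + C * Real.exp (-(C * s)) *
            (∫ t in Ioo 0 T, ∫ x' in ball (0 : Esp d) ρ₁,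
              ({y : Esp d | ⟪H (graphMk d y (ℓ y)), nuUp d ℓ y⟫ ≤ 0}.indicator
                  (fun y => |⟪H (graphMk d y (ℓ y)), nuUp d ℓ y⟫| *
                    (u (graphMk d y (ℓ y)) t) ^ 2 * omegaW d ℓ y) x'
                + {y : Esp d |
                    ⟪H (graphMk d y (ℓ y - ℓt y)), nuDown d (fun z => ℓ z - ℓt z) y⟫
                      ≤ 0}.indicator
                  (fun y =>
                    |⟪H (graphMk d y (ℓ y - ℓt y)),
                        nuDown d (fun z => ℓ z - ℓt z) y⟫| *
                    (u (graphMk d y (ℓ y - ℓt y)) t) ^ 2 * omegaW d (fun z => ℓ z - ℓt z) y) x'))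
        ≤ C * (∫ t in Ioo 0 T, ∫ x in graphDomain d ρ₁ ℓ ℓt,
              (deriv (u x) t + ⟪H x, gradient (fun z => u z t) x⟫ + p x * u x t) ^ 2
                * Real.exp (2 * s * phiW β H x t))
          + C * Real.exp (C * s) *
            (∫ t in Ioo 0 T, ∫ x' in ball (0 : Esp d) ρ₁,
              ({y : Esp d | 0 ≤ ⟪H (graphMk d y (ℓ y)), nuUp d ℓ y⟫}.indicator
                  (fun y => (u (graphMk d y (ℓ y)) t) ^ 2 * omegaW d ℓ y) x'
                + {y : Esp d | 0 ≤
                    ⟪H (graphMk d y (ℓ y - ℓt y)),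
                      nuDown d (fun z => ℓ z - ℓt z) y⟫}.indicator
                  (fun y => (u (graphMk d y (ℓ y - ℓt y)) t) ^ 2 * omegaW d (fun z => ℓ z - ℓt z) y) x'))
          + C * s * (∫ x in graphDomain d ρ₁ ℓ ℓt,
              (u x T) ^ 2 * Real.exp (2 * s * phiW β H x T)) := by
  have hℓ1 : ContDiffOn ℝ 1 ℓ (closedBall 0 ρ₁) := hℓ.of_le one_le_two
  have hℓt1 : ContDiffOn ℝ 1 ℓt (closedBall 0 ρ₁) := hℓt.of_le one_le_two
  obtain ⟨s₀, hs₀, C, hC, hCarleman⟩ := proposition1_carleman_estimate_general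
    (isGaussBoundary_graphDomain hρ₁ hℓ1 hℓt1 hℓtpos hℓt0)
    (isOpen_graphDomain (hℓ.continuousOn.mono ball_subset_closedBall)
      (hℓt.continuousOn.mono ball_subset_closedBall))
    (isBounded_graphDomain hℓ.continuousOn hℓt.continuousOn) measurableSet_ball
    measure_ball_lt_top.ne hT.le hM.le hβμ
  refine ⟨s₀, hs₀, C, hC, fun H p u s ⟨U, _, _, hKU, hHU, hHM, hDH, _⟩ hμ hp hpM hu hs => ?_⟩
  have hestimate := hCarleman H p u s (hHU.mono hKU) (fun x hx => hHM x (hKU hx))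
    (fun x hx => hDH x (hKU (subset_closure hx))) (fun x hx => hμ x (subset_closure hx))
    hp.aestronglyMeasurable hpM hu hs
  simp only [inflowIntegral, outflowIntegral, Fin.sum_univ_two] at hestimate
  exact hestimate
end
end

section
/- (Lemma 1.) Let D ⊂ ℝ^n be a bounded set with 0 ∈ closure(D) and diam(D) < δ₀²/(2M²). Then every vector field H that is (M,δ₀)-admissible on closure(D) satisfies ⟨H(x), ∇ψ_H(x)⟩ ≥ δ₀²/2 for every x ∈ closure(D). -/
noncomputable section

open MeasureTheory Metric Set
open scoped RealInnerProductSpace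

/- By the product rule, the derivative of `ψ_H` along `H` is `|H|² + ⟨x, DH(x) H(x)⟩`. The first
term is at least `δ₀²`. Since `0 ∈ closure D` gives `|x| ≤ diam D`, the second is at least
`-diam D · M² ≥ -δ₀² / 2`. -/

section Hilbert

variable {E : Type*} [NormedAddCommGroup E] [InnerProductSpace ℝ E] [CompleteSpace E]
  {H : E → E} {x : E}

theorem inner_gradient_inner_id (hH : DifferentiableAt ℝ H x) (v : E) :
    ⟪v, gradient (fun y => ⟪y, H y⟫) x⟫ = ⟪x, fderiv ℝ H x v⟫ + ⟪v, H x⟫ := by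
  rw [inner_gradient_right, fderiv_inner_apply ℝ differentiableAt_fun_id hH, fderiv_fun_id,
    ContinuousLinearMap.id_apply, conj_trivial]

theorem norm_sq_sub_le_inner_gradient_inner_id (hH : DifferentiableAt ℝ H x) :
    ‖H x‖ ^ 2 - ‖x‖ * (‖fderiv ℝ H x‖ * ‖H x‖) ≤ ⟪H x, gradient (fun y => ⟪y, H y⟫) x⟫ := by
  have hcross : |⟪x, fderiv ℝ H x (H x)⟫| ≤ ‖x‖ * (‖fderiv ℝ H x‖ * ‖H x‖) :=
    (abs_real_inner_le_norm _ _).trans (by gcongr; exact (fderiv ℝ H x).le_opNorm (H x))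
  rw [inner_gradient_inner_id hH, real_inner_self_eq_norm_sq]
  linarith [neg_le_of_abs_le hcross]

theorem lemma1_transversality_general {L M δ₀ : ℝ} (hδ₀ : 0 ≤ δ₀) {D : Set E}
    (hDb : Bornology.IsBounded D) (h0 : (0 : E) ∈ closure D)
    (hdiam : diam D * (2 * (L * M)) ≤ δ₀ ^ 2)
    (hdiff : ∀ x ∈ closure D, DifferentiableAt ℝ H x)
    (hHM : ∀ x ∈ closure D, ‖H x‖ ≤ M)
    (hDHL : ∀ x ∈ closure D, ‖fderiv ℝ H x‖ ≤ L)
    (hHδ₀ : ∀ x ∈ closure D, δ₀ ≤ ‖H x‖) :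
    ∀ x ∈ closure D, δ₀ ^ 2 / 2 ≤ ⟪H x, gradient (fun y => ⟪y, H y⟫) x⟫ := by
  intro x hx
  have hnorm : ‖x‖ ≤ diam D := by
    simpa only [dist_zero_right, diam_closure] using dist_le_diam_of_mem hDb.closure hx h0
  have hL : 0 ≤ L := (norm_nonneg _).trans (hDHL x hx)
  calc
    δ₀ ^ 2 / 2 ≤ δ₀ ^ 2 - diam D * (L * M) := by linarith
    _ ≤ ‖H x‖ ^ 2 - ‖x‖ * (‖fderiv ℝ H x‖ * ‖H x‖) := by
      gcongr
      exacts [hHδ₀ x hx, hDHL x hx, hHM x hx]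
    _ ≤ ⟪H x, gradient (fun y => ⟪y, H y⟫) x⟫ :=
      norm_sq_sub_le_inner_gradient_inner_id (hdiff x hx)

end Hilbert

/-- **Lemma 1.** -/
theorem lemma1_transversality
    (n : ℕ) (hn : 1 ≤ n) (M δ₀ : ℝ) (hM : 0 < M) (hδ₀ : 0 < δ₀)
    (D : Set (Esp n)) (hDb : Bornology.IsBounded D)
    (h0 : (0 : Esp n) ∈ closure D)
    (hdiam : Metric.diam D < δ₀ ^ 2 / (2 * M ^ 2))
    (H : Esp n → Esp n) (hH : IsAdmissible M δ₀ (closure D) H) :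
    ∀ x ∈ closure D, δ₀ ^ 2 / 2 ≤ ⟪H x, gradient (psiW H) x⟫ := by
  obtain ⟨U, hU, -, hDU, hC1, hHM, hDHM, hHδ₀⟩ := hH
  have hdiff : ∀ x ∈ closure D, DifferentiableAt ℝ H x := fun x hx =>
    (hC1.contDiffAt (hU.mem_nhds (hDU hx))).differentiableAt one_ne_zero
  have hdiam_mul : diam D * (2 * (M * M)) ≤ δ₀ ^ 2 := by
    rw [← sq M]
    exact ((lt_div_iff₀ (by positivity)).1 hdiam).le
  exact lemma1_transversality_general hδ₀.le hDb h0 hdiam_mul hdiff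
    (fun x hx => hHM x (hDU hx)) (fun x hx => hDHM x (hDU hx)) (fun x hx => (hHδ₀ x hx).le)
end
end
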